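/- arXiv:2005.10920 — 3 statements merged into one kernel-verified Lean document; each statement's English description precedes it below -/
import Mathlib

section
/- Let n > 1 be an integer coprime to 6. There exist infinitely many pairwise non-isomorphic number fields K with the following properties: there is a positive integer y with yⁿ ≡ 117649 (mod 388800) and y coprime to 7, 11 and 13, such that the degree-12 polynomial (x+2)(2x+1)(x−3)(3x−1)(x+4)(4x+1)(x−5)(5x−1)(2x−3)(3x−2)(4x−5)(5x−4) + yⁿ·x²(x−1)²(x+1)²(x−2)²(2x−1)² is irreducible over ℚ and K is its splitting field; K is a totally imaginary Galois extension of ℚ of degree 12 with Galois group isomorphic to the dihedral group D₆ of order 12; and rank_n Cl(K) ≥ 11. -/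
open Polynomial NumberField

/-- `M` contains a subgroup isomorphic to `(ℤ/nℤ)^s`, i.e. `rank_n M ≥ s`. -/
def HasZModRankGE (M : Type*) [CommGroup M] (n s : ℕ) : Prop :=
  ∃ φ : (Multiplicative (Fin s → ZMod n)) →* M, Function.Injective φ

/-- A number field (here a subfield of `ℂ`) is totally imaginary if none of its complex
embeddings takes only real values. -/
def TotallyImaginary (K : Type*) [Field K] : Prop :=
  ∀ φ : K →+* ℂ, ∃ x : K, (φ x).im ≠ 0

/-!
Write `yⁿ = 7⁶ + 388800 k`. Up to a constant the polynomial of the theorem is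
`f = (x² - x + 1)⁶ + 27 k (x (x² - 1) (x - 2) (2x - 1))²`, whose roots are permuted simply
transitively by a dihedral group of Möbius transformations over `ℚ`; hence one root `θ` generates
the splitting field. It is positive on `ℝ` for `k > 0`, and for `k ≡ 2 (mod 4)` it is Eisenstein
at `2` in the `(x² - x + 1)`-adic expansion.

As `f (-2) = yⁿ` is coprime to `f' (-2)`, the element `θ_d + 2` generates an `n`-th power of an
ideal for each of the twelve conjugates `θ_d`, which gives twelve ideal classes killed by `n`. A
relation of exponent `p ∣ n` among them reads `α ^ p = ε ∏ (θ_d + 2) ^ c_d` with a unit `ε`. The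
unit rank is `5`, and modulo `p`-th powers the units are generated by conjugates of the unit
`(θ + 1)² / (3 θ)`. At a prime `q ∣ y` there is a place of degree one with `θ ↦ -2`; there the
other conjugates and the units reduce to explicit rational numbers, up to sign products of
`2, 3, 5, 7, 11, 13`. If `y` has enough prime factors to detect `p`-th powers among such products,
the exponents satisfy linear equations modulo `p`, which force all `c_d` to be congruent to `c_1`.
So eleven of the twelve classes are independent. Prime factors of `y` that detect `p`-th powers are
found by comparing the poles at `1` of `ζ_F`, `F = ℚ(a ^ (1 / p))`, and of Dirichlet `L`-series.

The field contains `√(-27 k)`. A prime exactly dividing `k` therefore ramifies in it, and such a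
prime can be prescribed, so infinitely many fields occur.
-/

section RealDirichletSeries

variable {f : ℕ → ℝ}

lemma term_ofReal_eq (hf : f 0 = 0) (x : ℝ) (k : ℕ) :
    LSeries.term (fun k => (f k : ℂ)) (x : ℂ) k = ((f k / (k : ℝ) ^ x : ℝ) : ℂ) := by
  rw [LSeries.term_def]
  split_ifs with hk
  · simp [hk, hf]
  · rw [Complex.ofReal_div, Complex.ofReal_cpow (Nat.cast_nonneg _), Complex.ofReal_natCast]

lemma lseries_ofReal_eq (hf : f 0 = 0) (x : ℝ) :
    LSeries (fun k => (f k : ℂ)) (x : ℂ) = ((∑' k : ℕ, f k / (k : ℝ) ^ x : ℝ) : ℂ) := by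
  rw [LSeries, Complex.ofReal_tsum]
  exact tsum_congr (term_ofReal_eq hf x)

lemma summable_div_rpow_of_lseriesSummable (hf : f 0 = 0) {x : ℝ}
    (h : LSeriesSummable (fun k => (f k : ℂ)) x) : Summable fun k : ℕ => f k / (k : ℝ) ^ x :=
  Complex.summable_ofReal.mp (h.congr (term_ofReal_eq hf x))

lemma logMul_ofReal_eq :
    LSeries.logMul (fun k => (f k : ℂ)) = fun k : ℕ => ((Real.log k * f k : ℝ) : ℂ) := by
  ext k
  simp [LSeries.logMul, Complex.natCast_log]

lemma abscissaOfAbsConv_lt_of_bounded {C x : ℝ} (hf : ∀ k, |f k| ≤ C) (hx : 1 < x) :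
    LSeries.abscissaOfAbsConv (fun k => (f k : ℂ)) < (x : ℂ).re := by
  refine (LSeries.abscissaOfAbsConv_le_of_le_const ⟨C, fun k _ => ?_⟩).trans_lt ?_
  · simpa using hf k
  · exact_mod_cast hx

variable {C : ℝ} (hf0 : f 0 = 0) (hf : ∀ k, |f k| ≤ C) {x : ℝ} (hx : 1 < x)
include hf0 hf hx

lemma summable_div_rpow_of_bounded : Summable fun k : ℕ => f k / (k : ℝ) ^ x :=
  summable_div_rpow_of_lseriesSummable hf0
    (LSeriesSummable_of_abscissaOfAbsConv_lt_re (abscissaOfAbsConv_lt_of_bounded hf hx))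

lemma summable_log_mul_div_rpow_of_bounded :
    Summable fun k : ℕ => Real.log k * f k / (k : ℝ) ^ x := by
  have h := LSeriesSummable_logMul_of_lt_re (abscissaOfAbsConv_lt_of_bounded hf hx)
  rw [logMul_ofReal_eq] at h
  exact summable_div_rpow_of_lseriesSummable (by simp [hf0]) h

lemma hasDerivAt_tsum_div_rpow_of_bounded :
    HasDerivAt (fun x : ℝ => ∑' k : ℕ, f k / (k : ℝ) ^ x)
      (-∑' k : ℕ, Real.log k * f k / (k : ℝ) ^ x) x := by
  have h := (LSeries_hasDerivAt (abscissaOfAbsConv_lt_of_bounded hf hx)).real_of_complex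
  simpa only [lseries_ofReal_eq hf0, logMul_ofReal_eq,
    lseries_ofReal_eq (f := fun k => Real.log k * f k) (by simp), Complex.neg_re,
    Complex.ofReal_re] using h

end RealDirichletSeries

lemma tsum_div_rpow_le_tsum_div {f : ℕ → ℝ} (hf : ∀ k, 0 ≤ f k)
    (hs : Summable fun k : ℕ => f k / k) {x : ℝ} (hx : 1 ≤ x) :
    (Summable fun k : ℕ => f k / (k : ℝ) ^ x) ∧
      ∑' k : ℕ, f k / (k : ℝ) ^ x ≤ ∑' k : ℕ, f k / k := by
  have hle (k : ℕ) : f k / (k : ℝ) ^ x ≤ f k / k := by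
    rcases Nat.eq_zero_or_pos k with rfl | hk
    · simp [Real.zero_rpow (by linarith : x ≠ 0)]
    · have hk1 : (1 : ℝ) ≤ k := mod_cast hk
      refine div_le_div_of_nonneg_left (hf k) (by positivity) ?_
      simpa using Real.rpow_le_rpow_of_exponent_le hk1 hx
  have hsx := hs.of_nonneg_of_le (fun k => div_nonneg (hf k) (by positivity)) hle
  exact ⟨hsx, hsx.tsum_le_tsum hle hs⟩

lemma exists_neg_log_sub_le_of_hasDerivAt {F F' : ℝ → ℝ} {t C : ℝ}
    (hF : ∀ x ∈ Set.Ioc (1 : ℝ) 2, HasDerivAt F (-F' x) x)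
    (hF' : ∀ x ∈ Set.Ioc (1 : ℝ) 2, t / (x - 1) - C ≤ F' x) :
    ∃ D, ∀ x ∈ Set.Ioc (1 : ℝ) 2, t * (-Real.log (x - 1)) - D ≤ F x := by
  set G : ℝ → ℝ := fun x => F x + t * Real.log (x - 1) - C * x with hG
  have hderiv (x : ℝ) (hx : x ∈ Set.Ioc (1 : ℝ) 2) :
      HasDerivAt G (-F' x + t * (1 / (x - 1)) - C * 1) x := by
    have hlog : HasDerivAt (fun x : ℝ => Real.log (x - 1)) (1 / (x - 1)) x :=
      ((hasDerivAt_id x).sub_const 1).log (sub_pos.mpr hx.1).ne'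
    exact ((hF x hx).add (hlog.const_mul t)).sub ((hasDerivAt_id x).const_mul C)
  have hanti : AntitoneOn G (Set.Ioc 1 2) := by
    refine antitoneOn_of_deriv_nonpos (convex_Ioc 1 2)
      (fun x hx => (hderiv x hx).continuousAt.continuousWithinAt)
      (fun x hx => (hderiv x (interior_subset hx)).differentiableAt.differentiableWithinAt)
      fun x hx => ?_
    have h := hF' x (interior_subset hx)
    rw [(hderiv x (interior_subset hx)).deriv, mul_one_div]
    linarith
  refine ⟨-G 2 + 2 * |C|, fun x hx => ?_⟩
  have h2 : G 2 ≤ G x := hanti hx ⟨one_lt_two, le_rfl⟩ hx.2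
  have hC : -(2 * |C|) ≤ C * x := by
    nlinarith [neg_abs_le C, abs_nonneg C, hx.1, hx.2]
  simp only [hG] at h2 ⊢
  linarith

section PrimesInProgression

/-- The indicator function of the primes in the residue class `a` modulo `m`, as a sequence of
coefficients for a Dirichlet series. -/
noncomputable def primeIndicator {m : ℕ} (a : ZMod m) : ℕ → ℝ :=
  Set.indicator {k | k.Prime ∧ (k : ZMod m) = a} 1

variable {m : ℕ} (a : ZMod m)

lemma primeIndicator_of_not_prime {k : ℕ} (hk : ¬ k.Prime) : primeIndicator a k = 0 :=
  Set.indicator_of_notMem (fun h => hk h.1) _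

lemma primeIndicator_zero : primeIndicator a 0 = 0 :=
  primeIndicator_of_not_prime a Nat.not_prime_zero

lemma abs_primeIndicator_le_one (k : ℕ) : |primeIndicator a k| ≤ 1 := by
  unfold primeIndicator
  rw [Set.indicator_apply]
  split_ifs <;> simp

open ArithmeticFunction.vonMangoldt

lemma residueClass_eq_log_mul_primeIndicator_add (k : ℕ) :
    residueClass a k =
      Real.log k * primeIndicator a k + if k.Prime then 0 else residueClass a k := by
  by_cases hk : k.Prime
  · by_cases ha : (k : ZMod m) = a <;>
      simp [hk, ha, primeIndicator, residueClass, ArithmeticFunction.vonMangoldt_apply_prime hk]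
  · simp [hk, primeIndicator]

variable [NeZero m] {a} (ha : IsUnit a)
include ha

lemma exists_div_sub_le_tsum_log_mul_primeIndicator :
    ∃ C : ℝ, ∀ x ∈ Set.Ioc (1 : ℝ) 2, (m.totient : ℝ)⁻¹ / (x - 1) - C ≤
      ∑' k : ℕ, Real.log k * primeIndicator a k / (k : ℝ) ^ x := by
  obtain ⟨C, hC⟩ := LSeries_residueClass_lower_bound ha
  set primePowers : ℕ → ℝ := fun k => if k.Prime then 0 else residueClass a k with hpp
  have hpp0 (k : ℕ) : 0 ≤ primePowers k := by
    simp only [hpp]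
    split_ifs
    exacts [le_rfl, residueClass_nonneg a k]
  refine ⟨C + ∑' k : ℕ, primePowers k / k, fun x hx => ?_⟩
  obtain ⟨hsum, hle⟩ :=
    tsum_div_rpow_le_tsum_div hpp0 (summable_residueClass_non_primes_div a) hx.1.le
  have hsplit : ∑' k : ℕ, residueClass a k / (k : ℝ) ^ x =
      ∑' k : ℕ, Real.log k * primeIndicator a k / (k : ℝ) ^ x +
        ∑' k : ℕ, primePowers k / (k : ℝ) ^ x := by
    rw [← (summable_log_mul_div_rpow_of_bounded (primeIndicator_zero a)
      (abs_primeIndicator_le_one a) hx.1).tsum_add hsum]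
    refine tsum_congr fun k => ?_
    rw [← add_div, ← residueClass_eq_log_mul_primeIndicator_add]
  linarith [hC hx]

lemma exists_neg_log_sub_le_tsum_primeIndicator :
    ∃ C : ℝ, ∀ x ∈ Set.Ioc (1 : ℝ) 2, (m.totient : ℝ)⁻¹ * (-Real.log (x - 1)) - C ≤
      ∑' k : ℕ, primeIndicator a k / (k : ℝ) ^ x := by
  obtain ⟨C, hC⟩ := exists_div_sub_le_tsum_log_mul_primeIndicator ha
  exact exists_neg_log_sub_le_of_hasDerivAt (fun x hx => hasDerivAt_tsum_div_rpow_of_bounded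
    (primeIndicator_zero a) (abs_primeIndicator_le_one a) hx.1) hC

end PrimesInProgression

lemma subset_of_prod_primes_eq {M : Type*} [CommMonoidWithZero M] [IsCancelMulZero M]
    [Subsingleton Mˣ] {A B : Finset M} (hA : ∀ x ∈ A, Prime x) (hB : ∀ x ∈ B, Prime x)
    (h : ∏ x ∈ A, x = ∏ x ∈ B, x) : A ⊆ B := by
  intro x hx
  obtain ⟨y, hy, hxy⟩ := (hA x hx).exists_mem_finset_dvd (h ▸ Finset.dvd_prod_of_mem _ hx)
  rwa [associated_iff_eq.mp ((hA x hx).associated_of_dvd (hB y hy) hxy)]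

lemma prod_injOn_powerset_of_primes {M : Type*} [CommMonoidWithZero M] [IsCancelMulZero M]
    [Subsingleton Mˣ] {T : Finset M} (hT : ∀ x ∈ T, Prime x) :
    Set.InjOn (fun A : Finset M => ∏ x ∈ A, x) T.powerset := by
  intro A hA B hB h
  have hA' := fun x hx => hT x (Finset.mem_powerset.mp hA hx)
  have hB' := fun x hx => hT x (Finset.mem_powerset.mp hB hx)
  exact (subset_of_prod_primes_eq hA' hB' h).antisymm (subset_of_prod_primes_eq hB' hA' h.symm)

lemma inv_rpow_le_log_one_add_inv_rpow_add {q s : ℝ} (hq : 1 ≤ q) (hs : 1 ≤ s) :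
    (q ^ s)⁻¹ ≤ Real.log (1 + (q ^ s)⁻¹) + 1 / q ^ 2 := by
  set x := (q ^ s)⁻¹
  have hx : 0 ≤ x := by positivity
  have hxq : x ^ 2 ≤ 1 / q ^ 2 := by
    rw [one_div, ← inv_pow]
    exact pow_le_pow_left₀ hx
      (inv_anti₀ (by linarith) (by simpa using Real.rpow_le_rpow_of_exponent_le hq hs)) 2
  have hrat : x - x ^ 2 ≤ 2 * x / (x + 2) := by
    rw [le_div_iff₀ (by linarith)]
    nlinarith [sq_nonneg x, pow_nonneg hx 3]
  linarith [Real.le_log_one_add_of_nonneg hx]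

section DedekindZeta

open Filter Topology

variable (E : Type*) [Field E] [NumberField E]

/-- The coefficients of the Dedekind zeta function: the number of ideals of norm `k`, with the
value at `k = 0` set to `0`. -/
noncomputable def idealCount (k : ℕ) : ℝ :=
  if k = 0 then 0 else (Nat.card {I : Ideal (𝓞 E) // Ideal.absNorm I = k} : ℝ)

lemma idealCount_nonneg (k : ℕ) : 0 ≤ idealCount E k := by
  unfold idealCount
  split_ifs <;> positivity

lemma dedekindZeta_ofReal_eq (s : ℝ) :
    dedekindZeta E (s : ℂ) = ((∑' k : ℕ, idealCount E k / (k : ℝ) ^ s : ℝ) : ℂ) := by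
  rw [dedekindZeta, ← lseries_ofReal_eq (by simp [idealCount])]
  refine LSeries_congr (fun {k} hk => ?_) _
  simp [idealCount, hk]

lemma tendsto_sub_one_mul_tsum_idealCount :
    Tendsto (fun s : ℝ => (s - 1) * ∑' k : ℕ, idealCount E k / (k : ℝ) ^ s) (𝓝[>] 1)
      (𝓝 (dedekindZeta_residue E)) := by
  have h := (Complex.continuous_re.tendsto _).comp (tendsto_sub_one_mul_dedekindZeta_nhdsGT E)
  simp only [Complex.ofReal_re] at h
  refine h.congr fun s => ?_
  rw [Function.comp_apply, dedekindZeta_ofReal_eq, ← Complex.ofReal_one, ← Complex.ofReal_sub,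
    ← Complex.ofReal_mul, Complex.ofReal_re]

lemma exists_tsum_idealCount_le_div :
    ∃ C : ℝ, 0 < C ∧ ∀ᶠ s : ℝ in 𝓝[>] 1, (Summable fun k : ℕ => idealCount E k / (k : ℝ) ^ s) ∧
      ∑' k : ℕ, idealCount E k / (k : ℝ) ^ s ≤ C / (s - 1) := by
  have hpos := dedekindZeta_residue_pos E
  have hlim := tendsto_sub_one_mul_tsum_idealCount E
  refine ⟨dedekindZeta_residue E + 1, by linarith, ?_⟩
  filter_upwards [self_mem_nhdsWithin, hlim.eventually (eventually_lt_nhds (lt_add_one _)),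
    hlim.eventually (eventually_gt_nhds hpos)] with s (hs : 1 < s) hlt hgt
  refine ⟨?_, ?_⟩
  · by_contra hns
    simp [tsum_eq_zero_of_not_summable hns] at hgt
  · rw [le_div_iff₀ (sub_pos.mpr hs)]
    linarith

variable {E}

lemma absNorm_prod_ne_zero {A : Finset (Ideal (𝓞 E))} (hA : ∀ I ∈ A, Prime I) :
    Ideal.absNorm (∏ I ∈ A, I) ≠ 0 := by
  rw [Ne, Ideal.absNorm_eq_zero_iff]
  exact Finset.prod_ne_zero_iff.mpr fun I hI => (hA I hI).ne_zero

lemma card_filter_absNorm_prod_le_idealCount {T : Finset (Ideal (𝓞 E))}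
    (hT : ∀ I ∈ T, Prime I) {k : ℕ} (hk : k ≠ 0) :
    ((T.powerset.filter fun A => Ideal.absNorm (∏ I ∈ A, I) = k).card : ℝ) ≤ idealCount E k := by
  have : Finite {I : Ideal (𝓞 E) // Ideal.absNorm I = k} := Ideal.finite_setOfPred_absNorm_eq k
  rw [idealCount, if_neg hk, ← Nat.card_eq_finsetCard, Nat.cast_le]
  refine Nat.card_le_card_of_injective
    (fun A => ⟨∏ I ∈ A.1, I, (Finset.mem_filter.mp A.2).2⟩) fun A B h => Subtype.ext ?_
  exact prod_injOn_powerset_of_primes hT (Finset.mem_filter.mp A.2).1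
    (Finset.mem_filter.mp B.2).1 (congrArg Subtype.val h)

lemma prod_one_add_inv_absNorm_le_tsum_idealCount {s : ℝ}
    (hs : Summable fun k : ℕ => idealCount E k / (k : ℝ) ^ s)
    {T : Finset (Ideal (𝓞 E))} (hT : ∀ I ∈ T, Prime I) :
    ∏ I ∈ T, (1 + ((Ideal.absNorm I : ℝ) ^ s)⁻¹) ≤ ∑' k : ℕ, idealCount E k / (k : ℝ) ^ s := by
  classical
  set N : Finset (Ideal (𝓞 E)) → ℕ := fun A => Ideal.absNorm (∏ I ∈ A, I) with hN
  calc ∏ I ∈ T, (1 + ((Ideal.absNorm I : ℝ) ^ s)⁻¹)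
      = ∑ A ∈ T.powerset, ((N A : ℝ) ^ s)⁻¹ := by
        rw [Finset.prod_one_add]
        refine Finset.sum_congr rfl fun A _ => ?_
        simp only [hN]
        rw [Finset.prod_inv_distrib, map_prod, Nat.cast_prod,
          Real.finsetProd_rpow _ _ fun i _ => Nat.cast_nonneg _]
    _ = ∑ k ∈ T.powerset.image N,
          ((T.powerset.filter fun A => N A = k).card : ℝ) / (k : ℝ) ^ s := by
        rw [← Finset.sum_fiberwise_of_maps_to fun A hA => Finset.mem_image_of_mem N hA]
        refine Finset.sum_congr rfl fun k _ => ?_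
        rw [Finset.sum_congr rfl fun A hA => by rw [(Finset.mem_filter.mp hA).2],
          Finset.sum_const, nsmul_eq_mul, div_eq_mul_inv]
    _ ≤ ∑ k ∈ T.powerset.image N, idealCount E k / (k : ℝ) ^ s := by
        refine Finset.sum_le_sum fun k hk => div_le_div_of_nonneg_right ?_ (by positivity)
        obtain ⟨A, hA, rfl⟩ := Finset.mem_image.mp hk
        exact card_filter_absNorm_prod_le_idealCount hT
          (absNorm_prod_ne_zero fun I hI => hT I (Finset.mem_powerset.mp hA hI))
    _ ≤ ∑' k : ℕ, idealCount E k / (k : ℝ) ^ s :=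
        hs.sum_le_tsum _ fun k _ => div_nonneg (idealCount_nonneg E k) (by positivity)

lemma prod_one_add_inv_rpow_pow_le_tsum_idealCount {s : ℝ}
    (hs : Summable fun k : ℕ => idealCount E k / (k : ℝ) ^ s) {κ : ℕ → ℕ} {T : Finset ℕ}
    (hT : ∀ q ∈ T, ∃ F : Finset (Ideal (𝓞 E)),
      F.card = κ q ∧ ∀ I ∈ F, Prime I ∧ Ideal.absNorm I = q) :
    ∏ q ∈ T, (1 + ((q : ℝ) ^ s)⁻¹) ^ κ q ≤ ∑' k : ℕ, idealCount E k / (k : ℝ) ^ s := by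
  classical
  choose! F hcard hF using hT
  have hdisj : (T : Set ℕ).PairwiseDisjoint F := by
    intro q hq q' hq' hne
    refine Finset.disjoint_left.mpr fun I hI hI' => hne ?_
    rw [← (hF q hq I hI).2, (hF q' hq' I hI').2]
  have hprime : ∀ I ∈ T.biUnion F, Prime I := fun I hI => by
    obtain ⟨q, hq, hIq⟩ := Finset.mem_biUnion.mp hI
    exact (hF q hq I hIq).1
  refine le_of_eq_of_le ?_ (prod_one_add_inv_absNorm_le_tsum_idealCount hs hprime)
  rw [Finset.prod_biUnion hdisj]
  refine Finset.prod_congr rfl fun q hq => ?_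
  rw [← hcard q hq, ← Finset.prod_const]
  exact Finset.prod_congr rfl fun I hI => by rw [(hF q hq I hI).2]

-- `ζ_E` dominates the Euler factors of the given ideals and has a simple pole at `1`.
variable (E) in
lemma exists_sum_div_rpow_le_neg_log_sub_one {M B : ℕ} {κ : ℕ → ℕ} (hκ : ∀ q, κ q ≤ M)
    (hB : ∀ q > B, ∃ F : Finset (Ideal (𝓞 E)),
      F.card = κ q ∧ ∀ I ∈ F, Prime I ∧ Ideal.absNorm I = q) :
    ∃ C : ℝ, ∀ᶠ s : ℝ in 𝓝[>] 1, ∀ T : Finset ℕ, (∀ q ∈ T, B < q) →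
      ∑ q ∈ T, (κ q : ℝ) / (q : ℝ) ^ s ≤ -Real.log (s - 1) + C := by
  obtain ⟨C, hC, hzeta⟩ := exists_tsum_idealCount_le_div E
  refine ⟨Real.log C + ∑' k : ℕ, M * (1 / (k : ℝ) ^ 2), ?_⟩
  filter_upwards [self_mem_nhdsWithin, hzeta] with s (hs : 1 < s) ⟨hsum, hle⟩ T hT
  have hlog : ∑ q ∈ T, κ q * Real.log (1 + ((q : ℝ) ^ s)⁻¹) ≤ Real.log C - Real.log (s - 1) := by
    have h := Real.log_le_log (Finset.prod_pos fun q _ => by positivity)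
      ((prod_one_add_inv_rpow_pow_le_tsum_idealCount hsum fun q hq => hB q (hT q hq)).trans hle)
    rw [Real.log_prod fun q _ => by positivity, Real.log_div hC.ne' (by linarith)] at h
    simpa only [Real.log_pow] using h
  have hterm (q : ℕ) (hq : q ∈ T) : (κ q : ℝ) / (q : ℝ) ^ s ≤
      κ q * Real.log (1 + ((q : ℝ) ^ s)⁻¹) + M * (1 / (q : ℝ) ^ 2) := by
    have hq1 : (1 : ℝ) ≤ q := mod_cast Nat.one_le_of_lt (hT q hq)
    have h := mul_le_mul_of_nonneg_left (inv_rpow_le_log_one_add_inv_rpow_add hq1 hs.le)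
      (Nat.cast_nonneg (κ q))
    have hM : (κ q : ℝ) * (1 / (q : ℝ) ^ 2) ≤ M * (1 / (q : ℝ) ^ 2) :=
      mul_le_mul_of_nonneg_right (mod_cast hκ q) (by positivity)
    rw [div_eq_mul_inv]
    linarith
  have hsq : Summable fun k : ℕ => (M : ℝ) * (1 / (k : ℝ) ^ 2) :=
    (Real.summable_one_div_nat_pow.mpr one_lt_two).mul_left _
  have h := Finset.sum_le_sum hterm
  rw [Finset.sum_add_distrib] at h
  linarith [hsq.sum_le_tsum T fun k _ => by positivity]

variable (E) in
lemma exists_tsum_div_rpow_le_neg_log_sub_one {M B : ℕ} {κ : ℕ → ℕ} (hκ : ∀ q, κ q ≤ M)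
    (hB : ∀ q > B, ∃ F : Finset (Ideal (𝓞 E)),
      F.card = κ q ∧ ∀ I ∈ F, Prime I ∧ Ideal.absNorm I = q) :
    ∃ C : ℝ, ∀ᶠ s : ℝ in 𝓝[>] 1,
      ∑' q : ℕ, (κ q : ℝ) / (q : ℝ) ^ s ≤ -Real.log (s - 1) + C := by
  obtain ⟨C, hC⟩ := exists_sum_div_rpow_le_neg_log_sub_one E hκ hB
  refine ⟨C + ∑ _q ∈ Finset.range (B + 1), (M : ℝ), ?_⟩
  filter_upwards [self_mem_nhdsWithin, hC] with s (hs : 1 < s) hlarge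
  have hnonneg (q : ℕ) : 0 ≤ (κ q : ℝ) / (q : ℝ) ^ s := by positivity
  have hsmall (q : ℕ) : (κ q : ℝ) / (q : ℝ) ^ s ≤ M := by
    rcases Nat.eq_zero_or_pos q with rfl | hq
    · simp [Real.zero_rpow (by linarith : s ≠ 0)]
    · exact (div_le_self (Nat.cast_nonneg _)
        (Real.one_le_rpow (mod_cast hq) (by linarith))).trans (mod_cast hκ q)
  refine Real.tsum_le_of_sum_range_le hnonneg fun N => ?_
  rw [← Finset.sum_filter_not_add_sum_filter _ (fun q => B < q)]
  have h1 : ∑ q ∈ Finset.range N with ¬ B < q, (κ q : ℝ) / (q : ℝ) ^ s ≤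
      ∑ _q ∈ Finset.range (B + 1), (M : ℝ) :=
    (Finset.sum_le_sum fun q _ => hsmall q).trans <|
      Finset.sum_le_sum_of_subset_of_nonneg
        (fun q hq => by simp only [Finset.mem_filter, Finset.mem_range] at hq ⊢; omega)
        fun _ _ _ => by positivity
  have h2 := hlarge ((Finset.range N).filter (B < ·)) fun q hq => (Finset.mem_filter.mp hq).2
  linarith

end DedekindZeta

section Reduction

variable {q : ℕ} [Fact q.Prime]

lemma padicInt_toZMod_eq_zero_iff (z : ℤ_[q]) : PadicInt.toZMod z = 0 ↔ ‖z‖ < 1 := by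
  rw [← RingHom.mem_ker, PadicInt.ker_toZMod, IsLocalRing.mem_maximalIdeal, PadicInt.mem_nonunits]

lemma padicInt_norm_eq_one_of_toZMod_ne_zero {z : ℤ_[q]} (hz : PadicInt.toZMod z ≠ 0) :
    ‖z‖ = 1 :=
  le_antisymm (PadicInt.norm_le_one z) <|
    not_lt.mp fun h => hz ((padicInt_toZMod_eq_zero_iff z).mpr h)

/-- The `q`-adic number `z` is a `q`-adic integer with residue `a`. -/
def ReducesTo (z : ℚ_[q]) (a : ZMod q) : Prop :=
  ∃ w : ℤ_[q], (w : ℚ_[q]) = z ∧ PadicInt.toZMod w = a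

namespace ReducesTo

variable {z z' : ℚ_[q]} {a a' : ZMod q}

lemma add (h : ReducesTo z a) (h' : ReducesTo z' a') : ReducesTo (z + z') (a + a') := by
  obtain ⟨w, rfl, rfl⟩ := h
  obtain ⟨w', rfl, rfl⟩ := h'
  exact ⟨w + w', by simp, by simp⟩

lemma mul (h : ReducesTo z a) (h' : ReducesTo z' a') : ReducesTo (z * z') (a * a') := by
  obtain ⟨w, rfl, rfl⟩ := h
  obtain ⟨w', rfl, rfl⟩ := h'
  exact ⟨w * w', by simp, by simp⟩

lemma pow (h : ReducesTo z a) (m : ℕ) : ReducesTo (z ^ m) (a ^ m) := by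
  obtain ⟨w, rfl, rfl⟩ := h
  exact ⟨w ^ m, by simp, by simp⟩

lemma intCast (m : ℤ) : ReducesTo (m : ℚ_[q]) m := ⟨m, by simp, by simp⟩

lemma inv (h : ReducesTo z a) (ha : a ≠ 0) : ReducesTo z⁻¹ a⁻¹ := by
  obtain ⟨w, rfl, rfl⟩ := h
  have hw := PadicInt.mul_inv (padicInt_norm_eq_one_of_toZMod_ne_zero ha)
  refine ⟨w.inv, eq_inv_of_mul_eq_one_right ?_, eq_inv_of_mul_eq_one_right ?_⟩
  · simpa only [PadicInt.coe_mul, PadicInt.coe_one] using congrArg ((↑) : ℤ_[q] → ℚ_[q]) hw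
  · simpa only [map_mul, map_one] using congrArg PadicInt.toZMod hw

lemma div (h : ReducesTo z a) (h' : ReducesTo z' a') (ha' : a' ≠ 0) :
    ReducesTo (z / z') (a / a') := by
  simpa only [div_eq_mul_inv] using h.mul (h'.inv ha')

lemma zpow (h : ReducesTo z a) (ha : a ≠ 0) (m : ℤ) : ReducesTo (z ^ m) (a ^ m) := by
  obtain ⟨m, rfl | rfl⟩ := m.eq_nat_or_neg
  · simpa only [zpow_natCast] using h.pow m
  · simpa only [zpow_neg, zpow_natCast] using (h.pow m).inv (pow_ne_zero m ha)

lemma prod {ι : Type*} (s : Finset ι) {z : ι → ℚ_[q]} {a : ι → ZMod q}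
    (h : ∀ i ∈ s, ReducesTo (z i) (a i)) : ReducesTo (∏ i ∈ s, z i) (∏ i ∈ s, a i) := by
  classical
  induction s using Finset.induction_on with
  | empty => simpa using intCast 1
  | insert i s hi ih =>
    rw [Finset.prod_insert hi, Finset.prod_insert hi]
    exact (h i (s.mem_insert_self i)).mul (ih fun j hj => h j (s.mem_insert_of_mem hj))

lemma exists_pow_eq {p : ℕ} (hp : 0 < p) (h : ReducesTo (z ^ p) a) : ∃ b : ZMod q, b ^ p = a := by
  obtain ⟨w, hw, rfl⟩ := h
  obtain ⟨b, rfl⟩ := IsIntegrallyClosed.isIntegral_iff.mp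
    (IsIntegral.of_pow hp (hw ▸ isIntegral_algebraMap : IsIntegral ℤ_[q] (z ^ p)))
  refine ⟨PadicInt.toZMod b, ?_⟩
  rw [← map_pow]
  exact congrArg _ (Subtype.ext hw.symm)

end ReducesTo

lemma exists_reducesTo_root {F : ℤ[X]} {a : ZMod q} (h0 : aeval a F = 0)
    (h1 : aeval a (derivative F) ≠ 0) : ∃ z : ℚ_[q], aeval z F = 0 ∧ ReducesTo z a := by
  obtain ⟨w, rfl⟩ := ZMod.ringHom_surjective (PadicInt.toZMod (p := q)) a
  have toZMod_aeval (G : ℤ[X]) : PadicInt.toZMod (aeval w G) = aeval (PadicInt.toZMod w) G :=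
    (aeval_algHom_apply PadicInt.toZMod.toIntAlgHom w G).symm
  rw [← toZMod_aeval, padicInt_toZMod_eq_zero_iff] at h0
  have hder := padicInt_norm_eq_one_of_toZMod_ne_zero (toZMod_aeval (derivative F) ▸ h1)
  obtain ⟨z, hz, hzw, -⟩ := hensels_lemma (F := F) (a := w) (by rwa [hder, one_pow])
  refine ⟨z, ?_, z, rfl, ?_⟩
  · have := aeval_algebraMap_apply ℚ_[q] z F
    rwa [hz, map_zero] at this
  · rwa [hder, ← padicInt_toZMod_eq_zero_iff, map_sub, sub_eq_zero] at hzw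

variable {E : Type*} [Field E]

/-- The reduction of the ring of integers of `E` at the place given by an embedding of `E`
into `ℚ_q`. -/
noncomputable def residueHom (σ : E →+* ℚ_[q]) : 𝓞 E →+* ZMod q :=
  PadicInt.toZMod.comp <| (σ.comp (algebraMap (𝓞 E) E)).codRestrict (PadicInt.subring q) fun x => by
    obtain ⟨z, hz⟩ := IsIntegrallyClosed.isIntegral_iff.mp
      (((RingOfIntegers.isIntegral_coe x).map σ.toIntAlgHom).tower_top (A := ℤ_[q]))
    exact (congrArg norm hz).symm.trans_le z.2

lemma residueHom_eq_of_reducesTo {σ : E →+* ℚ_[q]} {x : 𝓞 E} {a : ZMod q}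
    (h : ReducesTo (σ x) a) : residueHom σ x = a := by
  obtain ⟨w, hw, rfl⟩ := h
  change PadicInt.toZMod _ = _
  congr 1
  exact Subtype.ext hw.symm

lemma exists_ringHom_reducesTo [Algebra ℚ E] (pb : PowerBasis ℚ E) {F : ℤ[X]}
    (hirr : Irreducible (F.map (Int.castRingHom ℚ))) (hF : aeval pb.gen F = 0) {a : ZMod q}
    (h0 : aeval a F = 0) (h1 : aeval a (derivative F) ≠ 0) :
    ∃ σ : E →+* ℚ_[q], ReducesTo (σ pb.gen) a := by
  obtain ⟨z, hz, hza⟩ := exists_reducesTo_root h0 h1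
  have hmin : aeval z (minpoly ℚ pb.gen) = 0 := by
    rw [← minpoly.eq_of_irreducible hirr (by rwa [← algebraMap_int_eq, aeval_map_algebraMap]),
      map_mul, ← algebraMap_int_eq, aeval_map_algebraMap, hz, zero_mul]
  exact ⟨(pb.lift z hmin).toRingHom, by simpa using hza⟩

lemma prime_ker_and_absNorm_ker [NumberField E] (f : 𝓞 E →+* ZMod q) :
    Prime (RingHom.ker f) ∧ Ideal.absNorm (RingHom.ker f) = q := by
  have hnorm : Ideal.absNorm (RingHom.ker f) = q := by
    rw [Ideal.absNorm_apply, Submodule.cardQuot_apply,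
      Nat.card_congr (RingHom.quotientKerEquivOfSurjective (ZMod.ringHom_surjective f)).toEquiv,
      Nat.card_zmod]
  refine ⟨Ideal.prime_of_isPrime (fun h => ?_) (RingHom.ker_isPrime f), hnorm⟩
  rw [h, Ideal.absNorm_bot] at hnorm
  exact (Fact.out : q.Prime).ne_zero hnorm.symm

lemma exists_primes_absNorm_eq [NumberField E] (pb : PowerBasis ℚ E) {F : ℤ[X]} (hmonic : F.Monic)
    (hirr : Irreducible (F.map (Int.castRingHom ℚ))) (hF : aeval pb.gen F = 0)
    (R : Finset (ZMod q)) (h0 : ∀ r ∈ R, aeval r F = 0)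
    (h1 : ∀ r ∈ R, aeval r (derivative F) ≠ 0) :
    ∃ 𝓟 : Finset (Ideal (𝓞 E)), 𝓟.card = R.card ∧
      ∀ I ∈ 𝓟, Prime I ∧ Ideal.absNorm I = q := by
  classical
  let α : 𝓞 E := ⟨pb.gen, F, hmonic, hF⟩
  have hom (r : R) : ∃ f : 𝓞 E →+* ZMod q, f α = r := by
    obtain ⟨σ, hσ⟩ := exists_ringHom_reducesTo pb hirr hF (h0 r r.2) (h1 r r.2)
    exact ⟨residueHom σ, residueHom_eq_of_reducesTo hσ⟩
  choose f hf using hom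
  have ker_injective : Function.Injective fun r => RingHom.ker (f r) := by
    intro r s hrs
    obtain ⟨b, hb⟩ := ZMod.intCast_surjective (r : ZMod q)
    have hmem : α - (b : 𝓞 E) ∈ RingHom.ker (f r) := by
      rw [RingHom.mem_ker, map_sub, hf, map_intCast, hb, sub_self]
    rw [show RingHom.ker (f r) = RingHom.ker (f s) from hrs, RingHom.mem_ker, map_sub, hf,
      map_intCast, hb, sub_eq_zero] at hmem
    exact Subtype.ext hmem.symm
  refine ⟨Finset.univ.image fun r => RingHom.ker (f r), ?_, fun I hI => ?_⟩
  · rw [Finset.card_image_of_injective _ ker_injective, Finset.card_univ, Fintype.card_coe]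
  · obtain ⟨r, -, rfl⟩ := Finset.mem_image.mp hI
    exact prime_ker_and_absNorm_ker (f r)

end Reduction

section PowerResidues

lemma exists_finset_card_pow_eq {p q : ℕ} (hp : p.Prime) [Fact q.Prime] {a c : ZMod q}
    (ha : a ≠ 0) (hc : c ^ p = a) :
    ∃ R : Finset (ZMod q), R.card = (if (q : ZMod p) = 1 then p else 1) ∧ ∀ r ∈ R, r ^ p = a := by
  classical
  split_ifs with hqp
  swap
  · exact ⟨{c}, Finset.card_singleton c, by simpa using hc⟩
  have := Fact.mk hp
  have hc0 : c ≠ 0 := ne_zero_pow hp.ne_zero (hc ▸ ha)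
  have hdvd : p ∣ Fintype.card (ZMod q)ˣ := by
    rw [ZMod.card_units, ← ZMod.natCast_eq_zero_iff, Nat.cast_sub (Fact.out : q.Prime).one_le, hqp,
      Nat.cast_one, sub_self]
  obtain ⟨ζ, hζ⟩ := exists_prime_orderOf_dvd_card p hdvd
  refine ⟨(Finset.range p).image fun i => c * ((ζ ^ i : (ZMod q)ˣ) : ZMod q), ?_, ?_⟩
  · rw [Finset.card_image_of_injOn, Finset.card_range]
    intro i hi j hj hij
    refine pow_injOn_Iio_orderOf (x := ζ) ?_ ?_ (Units.ext (mul_left_cancel₀ hc0 hij)) <;>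
      simp_all
  · intro r hr
    obtain ⟨i, -, rfl⟩ := Finset.mem_image.mp hr
    rw [mul_pow, hc, ← Units.val_pow_eq_pow_val, pow_right_comm, ← hζ, pow_orderOf_eq_one, one_pow,
      Units.val_one, mul_one]

/-- The number of `p`-th roots, in `ZMod q`, of a nonzero `p`-th power, for `q` prime. -/
def powRootCount (p q : ℕ) : ℕ :=
  if q.Prime then if (q : ZMod p) = 1 then p else 1 else 0

variable {p : ℕ}

lemma powRootCount_le (hp : p.Prime) (q : ℕ) : powRootCount p q ≤ p := by
  unfold powRootCount
  split_ifs
  exacts [le_rfl, hp.one_le, p.zero_le]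

lemma powRootCount_eq_primeIndicator_add (p q : ℕ) :
    (powRootCount p q : ℝ) =
      primeIndicator (1 : ZMod 1) q + (p - 1) * primeIndicator (1 : ZMod p) q := by
  have : (q : ZMod 1) = 1 := Subsingleton.elim _ _
  by_cases hq : q.Prime <;> by_cases hqp : (q : ZMod p) = 1 <;>
    simp [powRootCount, primeIndicator, hq, hqp, this]

lemma summable_primeIndicator_div_rpow {m : ℕ} (a : ZMod m) {s : ℝ} (hs : 1 < s) :
    Summable fun k : ℕ => primeIndicator a k / (k : ℝ) ^ s :=
  summable_div_rpow_of_bounded (primeIndicator_zero a) (abs_primeIndicator_le_one a) hs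

lemma exists_two_mul_neg_log_sub_le_tsum_powRootCount (hp : p.Prime) :
    ∃ C, ∀ s ∈ Set.Ioc (1 : ℝ) 2,
      2 * -Real.log (s - 1) - C ≤ ∑' q : ℕ, (powRootCount p q : ℝ) / (q : ℝ) ^ s := by
  have : NeZero p := ⟨hp.ne_zero⟩
  obtain ⟨C₁, h₁⟩ := exists_neg_log_sub_le_tsum_primeIndicator (isUnit_one (M := ZMod 1))
  obtain ⟨C₂, h₂⟩ := exists_neg_log_sub_le_tsum_primeIndicator (isUnit_one (M := ZMod p))
  refine ⟨C₁ + (p - 1) * C₂, fun s hs => ?_⟩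
  have hp1 : (1 : ℝ) < p := mod_cast hp.one_lt
  have tsum_eq : ∑' q : ℕ, (powRootCount p q : ℝ) / (q : ℝ) ^ s =
      ∑' q : ℕ, primeIndicator (1 : ZMod 1) q / (q : ℝ) ^ s +
        (p - 1) * ∑' q : ℕ, primeIndicator (1 : ZMod p) q / (q : ℝ) ^ s := by
    rw [← tsum_mul_left, ← (summable_primeIndicator_div_rpow _ hs.1).tsum_add
      ((summable_primeIndicator_div_rpow _ hs.1).mul_left _)]
    exact tsum_congr fun q => by rw [powRootCount_eq_primeIndicator_add]; ring
  have bound₁ := h₁ s hs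
  have bound₂ := mul_le_mul_of_nonneg_left (h₂ s hs) (sub_pos.mpr hp1).le
  rw [Nat.totient_one, Nat.cast_one, inv_one, one_mul] at bound₁
  rw [Nat.totient_prime hp, Nat.cast_sub hp.one_le, Nat.cast_one, mul_sub, ← mul_assoc,
    mul_inv_cancel₀ (sub_pos.mpr hp1).ne', one_mul] at bound₂
  rw [tsum_eq]
  linarith

lemma exists_primes_absNorm_eq_of_pow_eq (hp : p.Prime) {a : ℕ}
    [Fact (Irreducible (X ^ p - C (a : ℚ)))] {q : ℕ} [Fact q.Prime]
    (haq : (a : ZMod q) ≠ 0) (hpq : (p : ZMod q) ≠ 0) {c : ZMod q} (hc : c ^ p = a) :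
    ∃ 𝓟 : Finset (Ideal (𝓞 (AdjoinRoot (X ^ p - C (a : ℚ))))), 𝓟.card = powRootCount p q ∧
      ∀ I ∈ 𝓟, Prime I ∧ Ideal.absNorm I = q := by
  have hirr : Irreducible (X ^ p - C (a : ℚ)) := Fact.out
  obtain ⟨R, hcard, hR⟩ := exists_finset_card_pow_eq hp haq hc
  have map_eq : (X ^ p - C (a : ℤ)).map (Int.castRingHom ℚ) = X ^ p - C (a : ℚ) := by simp
  have hroot : aeval (AdjoinRoot.powerBasis hirr.ne_zero).gen (X ^ p - C (a : ℤ)) = 0 := by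
    have h := AdjoinRoot.eval₂_root (X ^ p - C (a : ℚ))
    rw [eval₂_sub, eval₂_X_pow, eval₂_C] at h
    simpa using h
  obtain ⟨𝓟, h𝓟, hprime⟩ := exists_primes_absNorm_eq (AdjoinRoot.powerBasis hirr.ne_zero)
    (monic_X_pow_sub_C _ hp.ne_zero) (map_eq ▸ hirr) hroot R
    (fun r hr => by simp [hR r hr]) fun r hr => by
      have hr0 : r ≠ 0 := ne_zero_pow hp.ne_zero (hR r hr ▸ haq)
      simp [derivative_X_pow, hpq, hr0]
  exact ⟨𝓟, by rw [h𝓟, hcard, powRootCount, if_pos (Fact.out : q.Prime)], hprime⟩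

theorem exists_prime_forall_pow_ne (hp : p.Prime) {a : ℕ} (ha : ∀ b : ℚ, b ^ p ≠ a) (B : ℕ) :
    ∃ q, q.Prime ∧ B < q ∧ ∀ c : ZMod q, c ^ p ≠ a := by
  by_contra! hres
  have : Fact (Irreducible (X ^ p - C (a : ℚ))) := ⟨X_pow_sub_C_irreducible_of_prime hp ha⟩
  have ha0 : 0 < a := Nat.pos_of_ne_zero fun h => ha 0 (by simp [h, hp.ne_zero])
  obtain ⟨C, upper⟩ := exists_tsum_div_rpow_le_neg_log_sub_one
    (AdjoinRoot (X ^ p - Polynomial.C (a : ℚ))) (B := B + a + p) (powRootCount_le hp) <| by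
    intro q hBq
    by_cases hq : q.Prime
    · have := Fact.mk hq
      obtain ⟨c, hc⟩ := hres q hq (by lia)
      refine exists_primes_absNorm_eq_of_pow_eq hp ?_ ?_ hc <;>
        rw [Ne, ZMod.natCast_eq_zero_iff]
      exacts [Nat.not_dvd_of_pos_of_lt ha0 (by lia), Nat.not_dvd_of_pos_of_lt hp.pos (by lia)]
    · exact ⟨∅, by simp [powRootCount, hq], by simp⟩
  obtain ⟨C', lower⟩ := exists_two_mul_neg_log_sub_le_tsum_powRootCount hp
  have log_tendsto : Filter.Tendsto (fun s : ℝ => -Real.log (s - 1)) (nhdsWithin 1 (Set.Ioi 1))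
      Filter.atTop := by
    refine Filter.tendsto_neg_atBot_atTop.comp (Real.tendsto_log_nhdsGT_zero.comp ?_)
    refine tendsto_nhdsWithin_iff.mpr ⟨?_, ?_⟩
    · exact ((continuous_id.sub continuous_const).tendsto' 1 0 (sub_self 1)).mono_left
        nhdsWithin_le_nhds
    · exact eventually_mem_nhdsWithin.mono fun s hs => sub_pos.mpr (Set.mem_Ioi.mp hs)
  obtain ⟨s, hs, hup, hlog⟩ := ((Filter.eventually_mem_set.mpr (Ioc_mem_nhdsGT one_lt_two)).and
    (upper.and (log_tendsto.eventually_gt_atTop (C + C')))).exists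
  linarith [lower s hs]

end PowerResidues

section DetectingPrimes

variable {ι : Type*} [Fintype ι] {ρ : ι → ℕ} {p : ℕ}

/-- Reduction modulo the primes in `T` detects `p`-th powers among the products of powers of the
numbers `ρ i`: such a product is a `p`-th power modulo all of them only if `p` divides all its
exponents. -/
def DetectsPowers (ρ : ι → ℕ) (p : ℕ) (T : Set ℕ) : Prop :=
  ∀ e : ι → ℤ, (∀ q ∈ T, ∀ [Fact q.Prime], ∃ β : ZMod q, β ^ p = ∏ i, (ρ i : ZMod q) ^ e i) →
    ∀ i, (p : ℤ) ∣ e i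

lemma DetectsPowers.mono {T T' : Set ℕ} (h : DetectsPowers ρ p T) (hT : T ⊆ T') :
    DetectsPowers ρ p T' :=
  fun e he => h e fun q hq => he q (hT hq)

lemma padicValNat_prod_pow (hρ : ∀ i, (ρ i).Prime) (hinj : Function.Injective ρ) (f : ι → ℕ)
    (i : ι) : padicValNat (ρ i) (∏ j, ρ j ^ f j) = f i := by
  rw [← Nat.factorization_def _ (hρ i),
    Nat.factorization_prod fun j _ => pow_ne_zero _ (hρ j).ne_zero, Finset.sum_apply',
    Finset.sum_eq_single_of_mem i (Finset.mem_univ i)]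
  · simp [(hρ i).factorization_pow]
  · intro j _ hji
    rw [(hρ j).factorization_pow, Finsupp.single_eq_of_ne (hinj.ne hji.symm)]

lemma dvd_of_rat_pow_eq_prod_pow (hρ : ∀ i, (ρ i).Prime) (hinj : Function.Injective ρ)
    {f : ι → ℕ} {b : ℚ} (hb : b ^ p = (∏ j, ρ j ^ f j : ℕ)) (i : ι) : p ∣ f i := by
  have := Fact.mk (hρ i)
  have hval := congrArg (padicValRat (ρ i)) hb
  rw [padicValRat.pow, padicValRat.of_nat, padicValNat_prod_pow hρ hinj] at hval
  exact Int.natCast_dvd_natCast.mp ⟨_, hval.symm⟩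

lemma exists_detectsPowers (hρ : ∀ i, (ρ i).Prime) (hinj : Function.Injective ρ) (hp : p.Prime)
    (B : ℕ) : ∃ T : Finset ℕ, (∀ q ∈ T, q.Prime ∧ B < q) ∧ DetectsPowers ρ p T := by
  classical
  have := Fact.mk hp
  have test_prime (E : ι → ZMod p) (hE : E ≠ 0) : ∃ q : ℕ, q.Prime ∧ B + ∑ i, ρ i < q ∧
      ∀ c : ZMod q, c ^ p ≠ ((∏ i, ρ i ^ (E i).val : ℕ) : ZMod q) := by
    refine exists_prime_forall_pow_ne hp (fun b hb => hE <| funext fun i => ?_) _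
    exact (ZMod.val_eq_zero _).mp <|
      Nat.eq_zero_of_dvd_of_lt (dvd_of_rat_pow_eq_prod_pow hρ hinj hb i) (ZMod.val_lt _)
  choose! Q hQ using test_prime
  refine ⟨(Finset.univ.filter (· ≠ 0)).image Q, fun q hq => ?_, fun e he i => ?_⟩
  · obtain ⟨E, hE, rfl⟩ := Finset.mem_image.mp hq
    have := hQ E (Finset.mem_filter.mp hE).2
    exact ⟨this.1, by lia⟩
  rw [← ZMod.intCast_zmod_eq_zero_iff_dvd]
  by_contra hi
  let E : ι → ZMod p := fun j => e j
  have hE : E ≠ 0 := fun h => hi (congrFun h i)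
  obtain ⟨hprime, hlarge, hno⟩ := hQ E hE
  have := Fact.mk hprime
  obtain ⟨β, hβ⟩ := he (Q E) (Finset.mem_image_of_mem Q (by simpa using hE))
  have hρ0 (j : ι) : (ρ j : ZMod (Q E)) ≠ 0 := by
    rw [Ne, ZMod.natCast_eq_zero_iff]
    have := Finset.single_le_sum (fun k _ => (ρ k).zero_le) (Finset.mem_univ j)
    exact Nat.not_dvd_of_pos_of_lt (hρ j).pos (by lia)
  have exponent (j : ι) : ∃ m : ℤ, e j = (E j).val + p * m := by
    obtain ⟨m, hm⟩ := (ZMod.intCast_zmod_eq_zero_iff_dvd (e j - (E j).val) p).mp (by simp [E])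
    exact ⟨m, by linarith⟩
  choose m hm using exponent
  refine hno (β * ∏ j, (ρ j : ZMod (Q E)) ^ (-m j)) ?_
  rw [mul_pow, hβ, ← Finset.prod_pow, ← Finset.prod_mul_distrib]
  push_cast
  refine Finset.prod_congr rfl fun j _ => ?_
  rw [← zpow_natCast, ← zpow_natCast, ← zpow_mul, ← zpow_add₀ (hρ0 j), hm j]
  congr 1
  ring

end DetectingPrimes

section Congruences

variable {n : ℕ}

lemma natCast_ne_one_of_eq_neg_one (hn : Odd n) {p q : ℕ} (hp : p.Prime) (hpn : p ∣ n)
    (hq : (q : ZMod n) = -1) : (q : ZMod p) ≠ 1 := by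
  intro hq1
  have hqp : (q : ZMod p) = -1 := by
    simpa only [map_natCast, map_neg, map_one] using congrArg (ZMod.castHom hpn (ZMod p)) hq
  have htwo : ((2 : ℕ) : ZMod p) = 0 := by
    push_cast
    linear_combination hqp - hq1
  exact (hn.of_dvd_nat hpn).ne_two_of_dvd_nat dvd_rfl <|
    (Nat.prime_dvd_prime_iff_eq hp Nat.prime_two).mp ((ZMod.natCast_eq_zero_iff 2 p).mp htwo)

lemma coprime_sub_one_of_eq_neg_one (hn : Odd n) {q : ℕ} (hq1 : 1 ≤ q) (hq : (q : ZMod n) = -1) :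
    n.Coprime (q - 1) := by
  refine (Nat.coprime_of_dvd fun p hp hpq hpn => ?_).symm
  refine natCast_ne_one_of_eq_neg_one hn hp hpn hq ?_
  rw [← sub_eq_zero, ← Nat.cast_one, ← Nat.cast_sub hq1, ZMod.natCast_eq_zero_iff]
  exact hpq

lemma exists_prime_gt_and_eq_neg_one (hn : n ≠ 0) (B : ℕ) :
    ∃ q, B < q ∧ q.Prime ∧ (q : ZMod n) = -1 :=
  have := NeZero.mk hn
  Nat.forall_exists_prime_gt_and_eq_mod isUnit_one.neg B

lemma exists_pow_modEq {M u : ℕ} (hM : M ≠ 0) (hn : n.Coprime M.totient) (hu : u.Coprime M) :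
    ∃ y : ℕ, y ^ n ≡ u [MOD M] := by
  have := NeZero.mk hM
  have hcard : (Nat.card (ZMod M)ˣ).Coprime n := by
    rw [Nat.card_eq_fintype_card, ZMod.card_units_eq_totient]
    exact hn.symm
  obtain ⟨v, hv⟩ := (powCoprime hcard).surjective (ZMod.unitOfCoprime u hu)
  refine ⟨(v : ZMod M).val, ?_⟩
  rw [← ZMod.natCast_eq_natCast_iff, Nat.cast_pow, ZMod.natCast_zmod_val]
  simpa only [powCoprime_apply, Units.val_pow_eq_pow_val, ZMod.coe_unitOfCoprime] using
    congrArg Units.val hv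

lemma exists_modEq_of_pairwise_coprime {a b c d : ℕ} (hab : a.Coprime b) (habc : (a * b).Coprime c)
    (habcd : (a * b * c).Coprime d) (w x y z : ℕ) :
    ∃ t, t ≡ w [MOD a] ∧ t ≡ x [MOD b] ∧ t ≡ y [MOD c] ∧ t ≡ z [MOD d] := by
  obtain ⟨t₁, hw, hx⟩ := Nat.chineseRemainder hab w x
  obtain ⟨t₂, h₁, hy⟩ := Nat.chineseRemainder habc t₁ y
  obtain ⟨t, h₂, hz⟩ := Nat.chineseRemainder habcd t₂ z
  have h := (h₂.of_mul_right c).trans h₁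
  exact ⟨t, (h.of_mul_right b).trans hw, (h.of_mul_left a).trans hx,
    (h₂.of_mul_left (a * b)).trans hy, hz⟩

lemma coprime_totient_two_pow_mul_three_pow_mul_sq (hn6 : n.Coprime 6) {Q : ℕ} (hQ : Q.Prime)
    (hQ6 : Q.Coprime 6) (hnQ : n.Coprime Q) (hnQ1 : n.Coprime (Q - 1)) :
    n.Coprime (2 ^ 8 * 3 ^ 5 * Q ^ 2).totient := by
  have hn2 : n.Coprime 2 := hn6.coprime_dvd_right (by norm_num)
  have hn3 : n.Coprime 3 := hn6.coprime_dvd_right (by norm_num)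
  have hcop : (2 ^ 8 * 3 ^ 5).Coprime (Q ^ 2) :=
    (Nat.Coprime.pow_right 2 (hQ6.symm.pow_left 8)).coprime_dvd_left (by norm_num)
  rw [Nat.totient_mul hcop, Nat.totient_mul (by norm_num),
    Nat.totient_prime_pow Nat.prime_two (by norm_num),
    Nat.totient_prime_pow Nat.prime_three (by norm_num), Nat.totient_prime_pow hQ (by norm_num)]
  norm_num
  rw [show 20736 = 2 ^ 8 * 3 ^ 4 by norm_num]
  exact ((hn2.pow_right 8).mul_right (hn3.pow_right 4)).mul_right (hnQ.mul_right hnQ1)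

lemma exists_pow_modEq_two_pow_mul_three_pow_mul_sq (hn6 : n.Coprime 6) {Q : ℕ} (hQ : Q.Prime)
    (hQ42 : Q.Coprime 42) (hnQ : n.Coprime Q) (hnQ1 : n.Coprime (Q - 1)) :
    ∃ y : ℕ, y ^ n ≡ 7 ^ 6 + 388800 * (2 * Q) [MOD 2 ^ 8 * 3 ^ 5 * Q ^ 2] := by
  have hQ6 : Q.Coprime 6 := hQ42.coprime_dvd_right (by norm_num)
  have coprime_six : (7 ^ 6 + 388800 * (2 * Q)).Coprime 6 := by
    rw [show 7 ^ 6 + 388800 * (2 * Q) = 7 ^ 6 + 6 * (129600 * Q) by ring,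
      Nat.coprime_add_mul_left_left]
    norm_num
  have coprime_Q : (7 ^ 6 + 388800 * (2 * Q)).Coprime Q := by
    rw [← mul_assoc, Nat.coprime_add_mul_right_left]
    exact (hQ42.coprime_dvd_right (by norm_num : 7 ∣ 42)).symm.pow_left 6
  refine exists_pow_modEq (by have := hQ.ne_zero; positivity)
    (coprime_totient_two_pow_mul_three_pow_mul_sq hn6 hQ hQ6 hnQ hnQ1) ?_
  exact ((coprime_six.pow_right 8).coprime_dvd_right (by norm_num)).mul_right
    (coprime_Q.pow_right 2)

lemma coprime_thirty_of_pow_eq (hn : n ≠ 0) {y k : ℕ} (h : y ^ n = 7 ^ 6 + 388800 * k) :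
    y.Coprime 30 := by
  refine Nat.Coprime.coprime_dvd_left (dvd_pow_self y hn) ?_
  rw [h, show 7 ^ 6 + 388800 * k = 7 ^ 6 + 30 * (12960 * k) by ring, Nat.coprime_add_mul_left_left]
  norm_num

lemma exists_pow_eq_of_coprime (hn6 : n.Coprime 6) {Q N : ℕ} (hQ : Q.Prime)
    (hQ30030 : Q.Coprime 30030) (hnQ : n.Coprime Q) (hnQ1 : n.Coprime (Q - 1))
    (hN : N.Coprime 30030) (hNQ : N.Coprime Q) (hNlarge : 7 ^ 6 + 388800 * (2 * Q) ≤ N) :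
    ∃ y m : ℕ, y ^ n = 7 ^ 6 + 388800 * (2 * Q + 4 * Q ^ 2 * m) ∧ y.Coprime 30030 ∧ N ∣ y := by
  have hnodd : Odd n := Nat.coprime_two_right.mp (hn6.coprime_dvd_right (by norm_num))
  obtain ⟨y₁, hy₁⟩ := exists_pow_modEq_two_pow_mul_three_pow_mul_sq hn6 hQ
    (hQ30030.coprime_dvd_right (by norm_num)) hnQ hnQ1
  have hQ25 : Q.Coprime (5 ^ 2) := (hQ30030.coprime_dvd_right (by norm_num)).pow_right 2
  have hQ1001 : Q.Coprime 1001 := hQ30030.coprime_dvd_right (by norm_num)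
  have hN1001 : N.Coprime 1001 := hN.coprime_dvd_right (by norm_num)
  have hN30 : N.Coprime (30 ^ 8) := (hN.coprime_dvd_right (by norm_num)).pow_right 8
  obtain ⟨y, hyM, hy25, hy1001, hyN⟩ := exists_modEq_of_pairwise_coprime
    (a := 2 ^ 8 * 3 ^ 5 * Q ^ 2) (b := 25) (c := 1001) (d := N)
    (Nat.Coprime.mul_left (by norm_num) (hQ25.pow_left 2))
    (Nat.Coprime.mul_left (Nat.Coprime.mul_left (by norm_num) (hQ1001.pow_left 2)) (by norm_num))
    (((((hN30.coprime_dvd_right (by norm_num)).mul_right (hNQ.pow_right 2)).mul_right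
      (hN30.coprime_dvd_right (by norm_num))).mul_right hN1001).symm) y₁ 24 1 0
  have pow_modEq_25 : y ^ n ≡ 7 ^ 6 + 388800 * (2 * Q) [MOD 25] := by
    rw [← ZMod.natCast_eq_natCast_iff] at hy25 ⊢
    push_cast
    rw [hy25, show ((24 : ℕ) : ZMod 25) = -1 by decide, hnodd.neg_one_pow,
      show (388800 : ZMod 25) = 0 by decide, zero_mul, add_zero]
    decide
  have hy_pos : 0 < y := Nat.pos_of_ne_zero fun h => by
    rw [h] at hy1001
    exact absurd hy1001 (by decide)
  have hle : 7 ^ 6 + 388800 * (2 * Q) ≤ y ^ n :=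
    hNlarge.trans <| (Nat.le_of_dvd hy_pos ((Nat.modEq_zero_iff_dvd).mp hyN)).trans <|
      Nat.le_self_pow hnodd.pos.ne' y
  obtain ⟨m, hm⟩ := (Nat.modEq_iff_dvd' hle).mp <| Nat.ModEq.symm <|
    (Nat.modEq_and_modEq_iff_modEq_mul (Nat.Coprime.mul_left (by norm_num)
      (hQ25.pow_left 2))).mp ⟨(hyM.pow n).trans hy₁, pow_modEq_25⟩
  have hpow : y ^ n = 7 ^ 6 + 388800 * (2 * Q + 4 * Q ^ 2 * m) := by
    rw [← Nat.sub_add_cancel hle, hm]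
    ring
  have coprime_1001 : y.Coprime 1001 := hy1001.gcd_eq.trans (Nat.gcd_one_left 1001)
  exact ⟨y, m, hpow, (coprime_thirty_of_pow_eq hnodd.pos.ne' hpow).mul_right coprime_1001,
    (Nat.modEq_zero_iff_dvd).mp hyN⟩

end Congruences

section Parameters

variable {n : ℕ}

/-- The primes dividing the values at `-2` of the generic units of the construction. -/
def smallPrime : Fin 6 → ℕ := ![2, 3, 5, 7, 11, 13]

lemma smallPrime_prime (r : Fin 6) : (smallPrime r).Prime := by
  fin_cases r <;> norm_num [smallPrime]

lemma smallPrime_injective : Function.Injective smallPrime := by decide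

lemma smallPrime_dvd (r : Fin 6) : smallPrime r ∣ 30030 := by
  fin_cases r <;> norm_num [smallPrime]

lemma natCast_smallPrime_ne_zero {y q : ℕ} [hq : Fact q.Prime] (hy : y.Coprime 30030) (hqy : q ∣ y)
    (r : Fin 6) : (smallPrime r : ZMod q) ≠ 0 := by
  rw [Ne, ZMod.natCast_eq_zero_iff]
  exact fun h => hq.out.not_dvd_one <|
    hy ▸ Nat.dvd_gcd hqy (h.trans (smallPrime_dvd r))

/-- The conditions on the integers `y` and `k` which make the field attached to `yⁿ` have a large
class group. -/
structure IsAdmissible (n y k : ℕ) : Prop where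
  pow_eq : y ^ n = 7 ^ 6 + 388800 * k
  mod_four : k % 4 = 2
  coprime : y.Coprime 30030
  detects : ∀ p, p.Prime → p ∣ n → DetectsPowers smallPrime p {q | q.Prime ∧ q ∣ y}
  exists_prime : ∃ q, q.Prime ∧ q ∣ y ∧ (q : ZMod n) = -1

lemma exists_test_modulus (hn : Odd n) (B : ℕ) :
    ∃ N, B < N ∧ (∀ b, 0 < b → b ≤ B → N.Coprime b) ∧
      (∀ p, p.Prime → p ∣ n → DetectsPowers smallPrime p {q | q.Prime ∧ q ∣ N}) ∧
      ∃ q, q.Prime ∧ q ∣ N ∧ (q : ZMod n) = -1 := by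
  classical
  have detecting_set (p : ℕ) (hp : p.Prime) := exists_detectsPowers smallPrime_prime
    smallPrime_injective hp B
  choose! T hT hdet using detecting_set
  obtain ⟨q, hBq, hq, hqn⟩ := exists_prime_gt_and_eq_neg_one hn.pos.ne' B
  set S := insert q (n.primeFactors.biUnion T) with hS
  have hSprime : ∀ l ∈ S, l.Prime ∧ B < l := by
    simp only [hS, Finset.forall_mem_insert, Finset.mem_biUnion, forall_exists_index, and_imp]
    exact ⟨⟨hq, hBq⟩, fun l p hp => hT p (Nat.prime_of_mem_primeFactors hp) l⟩
  have hdvd : ∀ l ∈ S, l ∣ ∏ l ∈ S, l := fun l => Finset.dvd_prod_of_mem _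
  have hqS : q ∈ S := Finset.mem_insert_self _ _
  refine ⟨∏ l ∈ S, l, ?_, fun b hb hbB => ?_, fun p hp hpn => ?_, q, hq, hdvd q hqS,
    hqn⟩
  · exact hBq.trans_le <| Nat.le_of_dvd
      (Finset.prod_pos fun l hl => (hSprime l hl).1.pos) (hdvd q hqS)
  · exact Nat.Coprime.prod_left fun l hl => ((hSprime l hl).1.coprime_iff_not_dvd).mpr <|
      Nat.not_dvd_of_pos_of_lt hb (by have := (hSprime l hl).2; lia)
  · refine (hdet p hp).mono fun l hl => ?_
    have hlS : l ∈ S := Finset.mem_insert_of_mem <| Finset.mem_biUnion.mpr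
      ⟨p, Nat.mem_primeFactors.mpr ⟨hp, hpn, hn.pos.ne'⟩, hl⟩
    exact ⟨(hSprime l hlS).1, hdvd l hlS⟩

theorem exists_isAdmissible (hn6 : n.Coprime 6) {Q : ℕ} (hQ : Q.Prime) (hnQ : n < Q)
    (hQ13 : 13 < Q) (hQn : (Q : ZMod n) = -1) :
    ∃ y k, IsAdmissible n y k ∧ Q ∣ k ∧ ¬ Q ^ 2 ∣ k := by
  have hnodd : Odd n := Nat.coprime_two_right.mp (hn6.coprime_dvd_right (by norm_num))
  have hQ30030 : Q.Coprime 30030 := by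
    rw [hQ.coprime_iff_not_dvd, show 30030 = 2 * 3 * 5 * 7 * 11 * 13 by norm_num]
    simp only [hQ.dvd_mul]
    rintro (((((h | h) | h) | h) | h) | h) <;> exact absurd (Nat.le_of_dvd (by norm_num) h) (by lia)
  have hQodd : Odd Q := Nat.coprime_two_right.mp (hQ30030.coprime_dvd_right (by norm_num))
  obtain ⟨N, hN, hNcop, hdet, q, hq, hqN, hqn⟩ :=
    exists_test_modulus hnodd (7 ^ 6 + 388800 * (2 * Q))
  obtain ⟨y, m, hpow, hcop, hNy⟩ := exists_pow_eq_of_coprime hn6 hQ hQ30030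
    (Nat.coprime_of_lt_prime hnodd.pos.ne' hnQ hQ).symm
    (coprime_sub_one_of_eq_neg_one hnodd hQ.one_le hQn)
    (hNcop 30030 (by lia) (by lia)) (hNcop Q hQ.pos (by lia)) hN.le
  refine ⟨y, 2 * Q + 4 * Q ^ 2 * m, ⟨hpow, ?_, hcop, fun p hp hpn => (hdet p hp hpn).mono
    fun l hl => ⟨hl.1, hl.2.trans hNy⟩, q, hq, hqN.trans hNy, hqn⟩, ⟨2 + 4 * Q * m, by ring⟩, ?_⟩
  · have := Nat.odd_iff.mp hQodd
    rw [mul_assoc 4]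
    lia
  · rw [← Nat.dvd_add_iff_left ⟨4 * m, by ring⟩, sq, mul_comm 2]
    exact fun h => absurd (Nat.le_of_dvd two_pos (Nat.dvd_of_mul_dvd_mul_left hQ.pos h)) (by lia)

end Parameters

section DihedralPoly

/-- The form `x² - xy + y²`, one of the two forms that the matrices of the dihedral group of Möbius
transformations preserve up to scaling. -/
def quadForm {R : Type*} [CommRing R] (x y : R) : R := x ^ 2 - x * y + y ^ 2

/-- The product of the six linear forms vanishing at `0, ∞, ±1, 2, 1/2`, an orbit of the dihedral
group of Möbius transformations. -/
def sexticForm {R : Type*} [CommRing R] (x y : R) : R :=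
  x * y * (x - y) * (x + y) * (x - 2 * y) * (2 * x - y)

/-- The monic integral polynomial proportional to the polynomial of the theorem when
`yⁿ = 7⁶ + 388800 k`. -/
noncomputable def dihedralPoly (k : ℤ) : ℤ[X] :=
  quadForm X 1 ^ 6 + C (27 * k) * sexticForm X 1 ^ 2

section QuadFormX

variable {R : Type*} [CommRing R]

lemma monic_quadForm_X : (quadForm X 1 : R[X]).Monic := by
  unfold quadForm
  monicity!

lemma natDegree_quadForm_X [Nontrivial R] : (quadForm X 1 : R[X]).natDegree = 2 := by
  unfold quadForm
  compute_degree!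

end QuadFormX

lemma natDegree_sexticForm_X_le : (sexticForm X 1 : ℤ[X]).natDegree ≤ 5 := by
  unfold sexticForm
  compute_degree

lemma degree_sexticForm_lt (k : ℤ) :
    (C (27 * k) * sexticForm X 1 ^ 2 : ℤ[X]).degree < (quadForm X 1 ^ 6 : ℤ[X]).degree := by
  rw [degree_eq_natDegree (monic_quadForm_X.pow 6).ne_zero, monic_quadForm_X.natDegree_pow,
    natDegree_quadForm_X]
  refine degree_le_natDegree.trans_lt (Nat.cast_lt.mpr ?_)
  calc (C (27 * k) * sexticForm X 1 ^ 2 : ℤ[X]).natDegree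
      ≤ (sexticForm X 1 ^ 2 : ℤ[X]).natDegree := natDegree_C_mul_le _ _
    _ ≤ 2 * 5 := natDegree_pow_le_of_le 2 natDegree_sexticForm_X_le
    _ < 6 * 2 := by norm_num

lemma dihedralPoly_monic (k : ℤ) : (dihedralPoly k).Monic :=
  (monic_quadForm_X.pow 6).add_of_left (degree_sexticForm_lt k)

lemma natDegree_dihedralPoly (k : ℤ) : (dihedralPoly k).natDegree = 12 := by
  rw [dihedralPoly, natDegree_add_eq_left_of_degree_lt (degree_sexticForm_lt k),
    monic_quadForm_X.natDegree_pow, natDegree_quadForm_X]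

lemma aeval_dihedralPoly {R : Type*} [CommRing R] (k : ℤ) (t : R) :
    aeval t (dihedralPoly k) = quadForm t 1 ^ 6 + 27 * k * sexticForm t 1 ^ 2 := by
  simp [dihedralPoly, quadForm, sexticForm, map_ofNat]

lemma irreducible_quadForm_X_zmod_two : Irreducible (quadForm X 1 : (ZMod 2)[X]) := by
  rw [monic_quadForm_X.irreducible_iff_roots_eq_zero_of_degree_le_three
    natDegree_quadForm_X.ge (natDegree_quadForm_X.trans_le (by norm_num)),
    Multiset.eq_zero_iff_forall_notMem]
  intro a ha
  have hne : ∀ b : ZMod 2, b ^ 2 - b + 1 ≠ 0 := by decide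
  exact hne a (by simpa [IsRoot, quadForm] using (mem_roots'.mp ha).2)

lemma dihedralPoly_modByMonic (k : ℤ) : dihedralPoly k %ₘ quadForm X 1 = C (-729 * k) := by
  refine (div_modByMonic_unique (quadForm X 1 ^ 5 + C (27 * k) * (4 * quadForm X 1 ^ 4
    - 35 * quadForm X 1 ^ 3 + 112 * quadForm X 1 ^ 2 - 162 * quadForm X 1 + 108)) _
    monic_quadForm_X ⟨?_, ?_⟩).2
  · have hC : (C (-729 * k) : ℤ[X]) = -27 * C (27 * k) := by
      rw [← C_ofNat, ← C_neg, ← C_mul]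
      congr 1
      ring
    rw [dihedralPoly, hC, quadForm, sexticForm]
    ring
  · rw [degree_eq_natDegree monic_quadForm_X.ne_zero, natDegree_quadForm_X]
    exact degree_C_le.trans_lt (by norm_num)

-- Eisenstein's criterion at `2` in the `(X² - X + 1)`-adic expansion.
lemma dihedralPoly_irreducible {k : ℤ} (hk : k % 4 = 2) : Irreducible (dihedralPoly k) := by
  have hker : RingHom.ker (algebraMap ℤ (ZMod 2)) = Ideal.span {2} := by
    simpa using ZMod.ker_intCastRingHom 2
  have hmap : ((27 * k : ℤ) : ZMod 2) = 0 :=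
    (ZMod.intCast_zmod_eq_zero_iff_dvd _ 2).mpr (by lia)
  refine generalizedEisenstein (K := ZMod 2) (q := quadForm X 1) (p := 6) ?_ monic_quadForm_X
    (dihedralPoly_monic _).isPrimitive ?_ ?_ ?_ ?_
  · simpa [quadForm] using irreducible_quadForm_X_zmod_two
  · rw [natDegree_dihedralPoly]
    norm_num
  · rw [(dihedralPoly_monic _).leadingCoeff]
    simp
  · rw [(dihedralPoly_monic _).leadingCoeff, dihedralPoly, Polynomial.map_add,
      Polynomial.map_mul, map_C, eq_intCast (algebraMap ℤ (ZMod 2)), hmap]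
    simp [quadForm]
  · rw [dihedralPoly_modByMonic, map_C, Ne, C_eq_zero, Ideal.Quotient.eq_zero_iff_mem, hker,
      Ideal.span_singleton_pow, Ideal.mem_span_singleton]
    lia

lemma map_dihedralPoly_irreducible {k : ℤ} (hk : k % 4 = 2) :
    Irreducible ((dihedralPoly k).map (Int.castRingHom ℚ)) :=
  ((dihedralPoly_monic k).irreducible_iff_irreducible_map_fraction_map (K := ℚ)).mp
    (dihedralPoly_irreducible hk)

lemma prod_add_C_mul_eq_C_mul_dihedralPoly {n y k : ℕ} (h : y ^ n = 7 ^ 6 + 388800 * k) :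
    ((X + 2) * (2 * X + 1) * (X - 3) * (3 * X - 1) * (X + 4) * (4 * X + 1) *
      (X - 5) * (5 * X - 1) * (2 * X - 3) * (3 * X - 2) * (4 * X - 5) * (5 * X - 4) +
      C ((y : ℚ) ^ n) * (X ^ 2 * (X - 1) ^ 2 * (X + 1) ^ 2 * (X - 2) ^ 2 * (2 * X - 1) ^ 2) :
      ℚ[X]) = C 14400 * (dihedralPoly k).map (Int.castRingHom ℚ) := by
  have hy : (y : ℚ) ^ n = 7 ^ 6 + 388800 * k := by exact_mod_cast h
  rw [hy]
  simp only [dihedralPoly, quadForm, sexticForm, Polynomial.map_add, Polynomial.map_pow,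
    Polynomial.map_mul, Polynomial.map_sub, map_X, Polynomial.map_one, Polynomial.map_ofNat,
    map_mul, C_add, C_pow, map_ofNat, map_natCast, Polynomial.map_natCast]
  ring

end DihedralPoly

section Mobius

variable {F F' : Type*} [Field F] [Field F'] {M N : Matrix (Fin 2) (Fin 2) ℤ}

/-- The Möbius transformation `t ↦ (at + b)/(ct + d)` of an integral matrix, with value `0` at its
pole. -/
def mobius (M : Matrix (Fin 2) (Fin 2) ℤ) (t : F) : F :=
  (M 0 0 * t + M 0 1) / (M 1 0 * t + M 1 1)

lemma map_mobius (f : F →+* F') (t : F) : f (mobius M t) = mobius M (f t) := by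
  simp [mobius]

lemma mobius_one (t : F) : mobius 1 t = t := by
  simp [mobius]

lemma mobius_smul {c : ℤ} (hc : (c : F) ≠ 0) (t : F) : mobius (c • M) t = mobius M t := by
  simp only [mobius, Matrix.smul_apply, smul_eq_mul, Int.cast_mul, mul_assoc, ← mul_add]
  exact mul_div_mul_left _ _ hc

lemma mobius_mobius {t : F} (ht : N 1 0 * t + N 1 1 ≠ 0) :
    mobius M (mobius N t) = mobius (M * N) t := by
  simp only [mobius, ← mul_div_assoc, div_add' _ _ _ ht, div_div_div_cancel_right₀ ht,
    Matrix.mul_apply, Fin.sum_univ_two]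
  push_cast
  congr 1 <;> ring

/-- The dihedral group of order `12` realised in `PGL₂(ℚ)`, by integral representatives of
determinant `±1` or `±3`. -/
def mobiusMatrix : DihedralGroup 6 → Matrix (Fin 2) (Fin 2) ℤ
  | .r i => (![!![1, 0; 0, 1], !![1, 1; -1, 2], !![0, 1; -1, 1], !![-1, 2; -2, 1], !![1, -1; 1, 0],
      !![2, -1; 1, 1]] : Fin 6 → Matrix (Fin 2) (Fin 2) ℤ) i
  | .sr i => (![!![0, 1; 1, 0], !![1, 1; 2, -1], !![1, 0; 1, -1], !![2, -1; 1, -2], !![-1, 1; 0, 1],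
      !![-1, 2; 1, 1]] : Fin 6 → Matrix (Fin 2) (Fin 2) ℤ) i

/-- The action of `d` on `t` by the Möbius transformation `mobiusMatrix d`. It is a right action,
see `dihedralMobius_mul`. -/
def dihedralMobius (d : DihedralGroup 6) (t : F) : F := mobius (mobiusMatrix d) t

lemma mobiusMatrix_one : mobiusMatrix 1 = 1 := by decide

lemma exists_mobiusMatrix_mul (d e : DihedralGroup 6) :
    ∃ c ∈ ({1, -1, 3, -3} : Finset ℤ),
      mobiusMatrix e * mobiusMatrix d = c • mobiusMatrix (d * e) := by
  revert d e
  decide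

lemma mobiusMatrix_snd_row_ne_zero (d : DihedralGroup 6) :
    mobiusMatrix d 1 0 ≠ 0 ∨ mobiusMatrix d 1 1 ≠ 0 := by
  revert d
  decide

lemma mobiusMatrix_fixedForm_ne_zero {d : DihedralGroup 6} (hd : d ≠ 1) :
    mobiusMatrix d 1 0 ≠ 0 ∨ mobiusMatrix d 1 1 - mobiusMatrix d 0 0 ≠ 0 ∨
      -mobiusMatrix d 0 1 ≠ 0 := by
  revert d
  decide

lemma dihedralMobius_one (t : F) : dihedralMobius 1 t = t := by
  rw [dihedralMobius, mobiusMatrix_one, mobius_one]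

lemma map_dihedralMobius (f : F →+* F') (d : DihedralGroup 6) (t : F) :
    f (dihedralMobius d t) = dihedralMobius d (f t) :=
  map_mobius f t

lemma dihedralMobius_mul [CharZero F] {t : F} {d : DihedralGroup 6} (e : DihedralGroup 6)
    (ht : mobiusMatrix d 1 0 * t + mobiusMatrix d 1 1 ≠ 0) :
    dihedralMobius (d * e) t = dihedralMobius e (dihedralMobius d t) := by
  obtain ⟨c, hc, hmul⟩ := exists_mobiusMatrix_mul d e
  have hc0 : c ≠ 0 := by
    rintro rfl
    revert hc
    decide
  rw [dihedralMobius, dihedralMobius, dihedralMobius, mobius_mobius ht, hmul,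
    mobius_smul (Int.cast_ne_zero.mpr hc0)]

section Forms

variable {R : Type*} [CommRing R] (d : DihedralGroup 6) (x y : R)

lemma quadForm_sq_mobiusMatrix :
    quadForm (mobiusMatrix d 0 0 * x + mobiusMatrix d 0 1 * y)
      (mobiusMatrix d 1 0 * x + mobiusMatrix d 1 1 * y) ^ 2 =
      ((mobiusMatrix d).det : ℤ) ^ 2 * quadForm x y ^ 2 := by
  rcases d with i | i <;> fin_cases i <;>
    simp [quadForm, mobiusMatrix, Matrix.det_fin_two] <;> ring

lemma sexticForm_sq_mobiusMatrix :
    sexticForm (mobiusMatrix d 0 0 * x + mobiusMatrix d 0 1 * y)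
      (mobiusMatrix d 1 0 * x + mobiusMatrix d 1 1 * y) ^ 2 =
      ((mobiusMatrix d).det : ℤ) ^ 6 * sexticForm x y ^ 2 := by
  rcases d with i | i <;> fin_cases i <;>
    simp [sexticForm, mobiusMatrix, Matrix.det_fin_two] <;> ring

end Forms

lemma aeval_div_dihedralPoly (k : ℤ) (x : F) {y : F} (hy : y ≠ 0) :
    aeval (x / y) (dihedralPoly k) =
      (quadForm x y ^ 6 + 27 * k * sexticForm x y ^ 2) / y ^ 12 := by
  rw [aeval_dihedralPoly, quadForm, quadForm, sexticForm, sexticForm]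
  field_simp

lemma aeval_dihedralMobius_eq_zero {k : ℤ} {t : F} (h : aeval t (dihedralPoly k) = 0)
    {d : DihedralGroup 6} (ht : mobiusMatrix d 1 0 * t + mobiusMatrix d 1 1 ≠ 0) :
    aeval (dihedralMobius d t) (dihedralPoly k) = 0 := by
  have hquad := quadForm_sq_mobiusMatrix d t 1
  have hsextic := sexticForm_sq_mobiusMatrix d t 1
  simp only [mul_one] at hquad hsextic
  rw [dihedralMobius, mobius, aeval_div_dihedralPoly k _ ht, pow_mul _ 2 3, hquad, hsextic,
    div_eq_zero_iff]
  rw [aeval_dihedralPoly] at h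
  exact Or.inl (by linear_combination ((mobiusMatrix d).det : F) ^ 6 * h)

end Mobius

section Galois

variable {E : Type*} [Field E] [NumberField E] {pb : PowerBasis ℚ E} {k : ℤ}

/-- The generator of `pb` is a root of `dihedralPoly k`, which is its minimal polynomial. -/
def IsDihedralGen (pb : PowerBasis ℚ E) (k : ℤ) : Prop :=
  minpoly ℚ pb.gen = (dihedralPoly k).map (Int.castRingHom ℚ)

namespace IsDihedralGen

lemma aeval_minpoly (h : IsDihedralGen pb k) {A : Type*} [CommRing A] [Algebra ℚ A] (t : A) :
    aeval t (minpoly ℚ pb.gen) = aeval t (dihedralPoly k) := by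
  rw [h]
  exact aeval_map_algebraMap ℚ t (dihedralPoly k)

lemma aeval_gen (h : IsDihedralGen pb k) : aeval pb.gen (dihedralPoly k) = 0 := by
  rw [← h.aeval_minpoly, minpoly.aeval]

lemma natDegree_minpoly (h : IsDihedralGen pb k) : (minpoly ℚ pb.gen).natDegree = 12 := by
  rw [h, (dihedralPoly_monic k).natDegree_map, natDegree_dihedralPoly]

lemma finrank_eq (h : IsDihedralGen pb k) : Module.finrank ℚ E = 12 := by
  rw [pb.finrank, ← pb.natDegree_minpoly, h.natDegree_minpoly]

lemma quadratic_ne_zero (h : IsDihedralGen pb k) {a b c : ℤ} (habc : a ≠ 0 ∨ b ≠ 0 ∨ c ≠ 0) :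
    a * pb.gen ^ 2 + b * pb.gen + c ≠ 0 := by
  intro h0
  have hp0 : (C (a : ℚ) * X ^ 2 + C (b : ℚ) * X + C (c : ℚ)) ≠ 0 := by
    intro hp
    have hcoeff (i : ℕ) := congrArg (coeff · i) hp
    have h0 := hcoeff 0
    have h1 := hcoeff 1
    have h2 := hcoeff 2
    simp only [coeff_add, coeff_C_mul, coeff_X_pow, coeff_X, coeff_C, coeff_zero] at h0 h1 h2
    norm_num at h0 h1 h2
    tauto
  have hdvd : minpoly ℚ pb.gen ∣ C (a : ℚ) * X ^ 2 + C (b : ℚ) * X + C (c : ℚ) :=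
    minpoly.dvd ℚ pb.gen (by simpa using h0)
  have hdeg : (C (a : ℚ) * X ^ 2 + C (b : ℚ) * X + C (c : ℚ)).natDegree ≤ 2 := by
    compute_degree
  have := natDegree_le_of_dvd hdvd hp0
  rw [h.natDegree_minpoly] at this
  lia

lemma linear_ne_zero (h : IsDihedralGen pb k) {a b : ℤ} (hab : a ≠ 0 ∨ b ≠ 0) :
    a * pb.gen + b ≠ 0 := by
  simpa using h.quadratic_ne_zero (a := 0) (Or.inr hab)

lemma mobiusMatrix_denom_ne_zero (h : IsDihedralGen pb k) (d : DihedralGroup 6) :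
    mobiusMatrix d 1 0 * pb.gen + mobiusMatrix d 1 1 ≠ 0 :=
  h.linear_ne_zero (mobiusMatrix_snd_row_ne_zero d)

lemma dihedralMobius_gen_ne_gen (h : IsDihedralGen pb k) {d : DihedralGroup 6} (hd : d ≠ 1) :
    dihedralMobius d pb.gen ≠ pb.gen := by
  intro hfix
  rw [dihedralMobius, mobius, div_eq_iff (h.mobiusMatrix_denom_ne_zero d)] at hfix
  refine h.quadratic_ne_zero (mobiusMatrix_fixedForm_ne_zero hd) ?_
  push_cast
  linear_combination -hfix

lemma aeval_dihedralMobius_minpoly (h : IsDihedralGen pb k) (d : DihedralGroup 6) :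
    aeval (dihedralMobius d pb.gen) (minpoly ℚ pb.gen) = 0 := by
  rw [h.aeval_minpoly, aeval_dihedralMobius_eq_zero h.aeval_gen (h.mobiusMatrix_denom_ne_zero d)]

/-- The endomorphisms of `E` carrying the generator to its images under the Möbius
transformations. -/
noncomputable def dihedralAction (h : IsDihedralGen pb k) : DihedralGroup 6 →* (E →ₐ[ℚ] E) where
  toFun d := pb.lift (dihedralMobius d pb.gen) (h.aeval_dihedralMobius_minpoly d)
  map_one' := pb.algHom_ext <| by
    rw [pb.lift_gen, dihedralMobius_one, AlgHom.one_apply]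
  map_mul' d e := pb.algHom_ext <| by
    rw [pb.lift_gen, dihedralMobius_mul e (h.mobiusMatrix_denom_ne_zero d), AlgHom.mul_apply,
      pb.lift_gen]
    conv_rhs => rw [← AlgHom.coe_toRingHom, map_dihedralMobius, AlgHom.coe_toRingHom, pb.lift_gen]

lemma dihedralAction_gen (h : IsDihedralGen pb k) (d : DihedralGroup 6) :
    h.dihedralAction d pb.gen = dihedralMobius d pb.gen :=
  pb.lift_gen _ (h.aeval_dihedralMobius_minpoly d)

lemma dihedralAction_injective (h : IsDihedralGen pb k) :
    Function.Injective ((algEquivEquivAlgHom ℚ E).symm.toMonoidHom.comp h.dihedralAction) := by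
  refine (algEquivEquivAlgHom ℚ E).symm.injective.comp
    ((injective_iff_map_eq_one' _).mpr fun d => ⟨fun hd => ?_, by rintro rfl; exact map_one _⟩)
  by_contra hne
  exact h.dihedralMobius_gen_ne_gen hne (by rw [← h.dihedralAction_gen, hd, AlgHom.one_apply])

lemma card_aut (h : IsDihedralGen pb k) : Nat.card (E ≃ₐ[ℚ] E) = 12 := by
  refine le_antisymm ?_ ?_
  · rw [← h.finrank_eq, Nat.card_congr (algEquivEquivAlgHom ℚ E).toEquiv]
    exact card_algHom_le_finrank ℚ E E
  · exact DihedralGroup.nat_card.symm.trans_le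
      (Nat.card_le_card_of_injective _ h.dihedralAction_injective)

lemma isGalois (h : IsDihedralGen pb k) : IsGalois ℚ E :=
  IsGalois.of_card_aut_eq_finrank _ _ (by rw [h.card_aut, h.finrank_eq])

lemma exists_galEquiv (h : IsDihedralGen pb k) :
    ∃ ρ : DihedralGroup 6 ≃* (E ≃ₐ[ℚ] E), ∀ d, ρ d pb.gen = dihedralMobius d pb.gen := by
  refine ⟨MulEquiv.ofBijective _ ((Nat.bijective_iff_injective_and_card _).mpr
    ⟨h.dihedralAction_injective, by rw [h.card_aut, DihedralGroup.nat_card]⟩), fun d => ?_⟩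
  exact h.dihedralAction_gen d

end IsDihedralGen

end Galois

section BasicUnit

variable {F F' : Type*} [Field F] [Field F']

/-- A unit when `t` is a root of `dihedralPoly k`; the units of the construction are its
conjugates. -/
def basicUnit (t : F) : F := (t + 1) ^ 2 / (3 * t)

lemma map_basicUnit (f : F →+* F') (t : F) : f (basicUnit t) = basicUnit (f t) := by
  simp [basicUnit, map_ofNat]

/-- The exponents of the small primes in `dihedralMobius d (-2) + 2` for `d ≠ 1`. That number
vanishes for `d = 1`, where the exponents are set to `0`. -/
def shiftExponent : DihedralGroup 6 → Fin 6 → ℤ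
  | .r i => (![![0, 0, 0, 0, 0, 0], ![-2, 0, 0, 1, 0, 0], ![0, -1, 0, 1, 0, 0],
      ![1, 0, -1, 1, 0, 0], ![-1, 0, 0, 1, 0, 0], ![0, 0, 0, 1, 0, 0]] : Fin 6 → Fin 6 → ℤ) i
  | .sr i => (![![-1, 1, 0, 0, 0, 0], ![0, 0, -1, 0, 1, 0], ![3, -1, 0, 0, 0, 0],
      ![-2, 0, 0, 0, 0, 1], ![0, 0, 1, 0, 0, 0], ![1, 0, 0, 0, 0, 0]] : Fin 6 → Fin 6 → ℤ) i

/-- The exponents of the small primes in `basicUnit (dihedralMobius d (-2))`. -/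
def unitExponent : DihedralGroup 6 → Fin 6 → ℤ
  | .r i => (![![-1, -1, 0, 0, 0, 0], ![-2, 1, 0, 0, 0, 0], ![4, -2, 0, 0, 0, 0],
      ![-2, 3, -1, 0, 0, 0], ![-1, -2, 2, 0, 0, 0], ![2, 1, -1, 0, 0, 0]] : Fin 6 → Fin 6 → ℤ) i
  | .sr i => (![![-1, -1, 0, 0, 0, 0], ![2, 1, -1, 0, 0, 0], ![-1, -2, 2, 0, 0, 0],
      ![-2, 3, -1, 0, 0, 0], ![4, -2, 0, 0, 0, 0], ![-2, 1, 0, 0, 0, 0]] : Fin 6 → Fin 6 → ℤ) i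

lemma prod_smallPrime_zpow (e : Fin 6 → ℤ) : ∏ r, (smallPrime r : F) ^ e r =
    2 ^ e 0 * 3 ^ e 1 * 5 ^ e 2 * 7 ^ e 3 * 11 ^ e 4 * 13 ^ e 5 := by
  simp [Fin.prod_univ_six, smallPrime]

lemma dihedralMobius_neg_two (d : DihedralGroup 6) : dihedralMobius d (-2 : F) =
    (mobiusMatrix d 0 0 * (-2) + mobiusMatrix d 0 1 : ℤ) /
      (mobiusMatrix d 1 0 * (-2) + mobiusMatrix d 1 1 : ℤ) := by
  simp [dihedralMobius, mobius]

section Values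

variable (hF : ∀ r, (smallPrime r : F) ≠ 0) (d : DihedralGroup 6)
include hF

lemma mobiusMatrix_denom_neg_two_ne_zero :
    mobiusMatrix d 1 0 * (-2 : F) + mobiusMatrix d 1 1 ≠ 0 := by
  have h2 : (2 : F) ≠ 0 := by simpa [smallPrime] using hF 0
  have h3 : (3 : F) ≠ 0 := by simpa [smallPrime] using hF 1
  have h5 : (5 : F) ≠ 0 := by simpa [smallPrime] using hF 2
  have h4 : (4 : F) ≠ 0 := by rw [← two_add_two_eq_four, ← two_mul]; exact mul_ne_zero h2 h2
  rcases d with i | i <;> fin_cases i <;> simp [mobiusMatrix] <;> norm_num [h2, h3, h4, h5]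

lemma prod_smallPrime_zpow_ne_zero (e : Fin 6 → ℤ) : ∏ r, (smallPrime r : F) ^ e r ≠ 0 :=
  Finset.prod_ne_zero_iff.mpr fun r _ => zpow_ne_zero _ (hF r)

variable {d} in
lemma sq_dihedralMobius_neg_two_add_two (hd : d ≠ 1) :
    (dihedralMobius d (-2 : F) + 2) ^ 2 = (∏ r, (smallPrime r : F) ^ shiftExponent d r) ^ 2 := by
  have h2 : (2 : F) ≠ 0 := by simpa [smallPrime] using hF 0
  have h3 : (3 : F) ≠ 0 := by simpa [smallPrime] using hF 1
  have h5 : (5 : F) ≠ 0 := by simpa [smallPrime] using hF 2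
  have h4 : (4 : F) ≠ 0 := by rw [← two_add_two_eq_four, ← two_mul]; exact mul_ne_zero h2 h2
  rw [prod_smallPrime_zpow, dihedralMobius_neg_two]
  rcases d with i | i <;> fin_cases i
  · exact absurd rfl hd
  all_goals
    simp [mobiusMatrix, shiftExponent, zpow_ofNat]
    field_simp
    norm_num

lemma sq_basicUnit_dihedralMobius_neg_two :
    basicUnit (dihedralMobius d (-2 : F)) ^ 2 =
      (∏ r, (smallPrime r : F) ^ unitExponent d r) ^ 2 := by
  have h2 : (2 : F) ≠ 0 := by simpa [smallPrime] using hF 0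
  have h3 : (3 : F) ≠ 0 := by simpa [smallPrime] using hF 1
  have h5 : (5 : F) ≠ 0 := by simpa [smallPrime] using hF 2
  have h4 : (4 : F) ≠ 0 := by rw [← two_add_two_eq_four, ← two_mul]; exact mul_ne_zero h2 h2
  rw [prod_smallPrime_zpow, dihedralMobius_neg_two]
  rcases d with i | i <;> fin_cases i
  all_goals
    simp [mobiusMatrix, unitExponent, basicUnit, zpow_ofNat]
    field_simp
    norm_num

end Values

end BasicUnit

section LocalRelations

lemma prod_zpow_eq_zpow_sum {G₀ κ : Type*} [CommGroupWithZero G₀] {x : G₀} (hx : x ≠ 0)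
    (s : Finset κ) (f : κ → ℤ) : ∏ i ∈ s, x ^ f i = x ^ ∑ i ∈ s, f i := by
  induction s using Finset.cons_induction with
  | empty => simp
  | cons i s hi ih => rw [Finset.prod_cons, Finset.sum_cons, ih, zpow_add₀ hx]

-- Squaring makes the signs of the residues `x i` irrelevant.
lemma DetectsPowers.dvd_sum {ι κ : Type*} [Fintype ι] [Fintype κ] {ρ : ι → ℕ} {p : ℕ} {T : Set ℕ}
    (hT : DetectsPowers ρ p T) (hp : Odd p) (a : κ → ℤ) (v : κ → ι → ℤ)
    (h : ∀ q ∈ T, ∀ [Fact q.Prime], (∀ r, (ρ r : ZMod q) ≠ 0) ∧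
      ∃ x : κ → ZMod q, (∀ i, x i ^ 2 = (∏ r, (ρ r : ZMod q) ^ v i r) ^ 2) ∧
        ∃ β : ZMod q, β ^ p = ∏ i, x i ^ a i) (r : ι) :
    (p : ℤ) ∣ ∑ i, a i * v i r := by
  have hcop : IsCoprime (p : ℤ) 2 := by
    exact_mod_cast (Nat.isCoprime_iff_coprime (n := 2)).mpr (Nat.coprime_two_right.mpr hp)
  refine hcop.dvd_of_dvd_mul_left (hT (fun r => 2 * ∑ i, a i * v i r) (fun q hq _ => ?_) r)
  obtain ⟨hρ, x, hx, β, hβ⟩ := h q hq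
  refine ⟨β ^ 2, ?_⟩
  calc (β ^ 2) ^ p = ∏ i, (x i ^ 2) ^ a i := by
        rw [pow_right_comm, hβ, ← Finset.prod_pow]
        exact Finset.prod_congr rfl fun i _ => by
          rw [← zpow_natCast, ← zpow_natCast, zpow_comm]
    _ = ∏ r, ∏ i, (ρ r : ZMod q) ^ (2 * (a i * v i r)) := by
        rw [Finset.prod_comm]
        refine Finset.prod_congr rfl fun i _ => ?_
        rw [hx, ← Finset.prod_pow, ← Finset.prod_zpow]
        refine Finset.prod_congr rfl fun r _ => ?_
        rw [← zpow_natCast, ← zpow_mul, ← zpow_mul]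
        congr 1
        push_cast
        ring
    _ = ∏ r, (ρ r : ZMod q) ^ (2 * ∑ i, a i * v i r) := by
        refine Finset.prod_congr rfl fun r _ => ?_
        rw [Finset.mul_sum, prod_zpow_eq_zpow_sum (hρ r)]

section Reduction

variable {q : ℕ} [Fact q.Prime] {τ : ℚ_[q]} {a : ZMod q}

lemma ReducesTo.mobius {M : Matrix (Fin 2) (Fin 2) ℤ} (h : ReducesTo τ a)
    (ha : M 1 0 * a + M 1 1 ≠ 0) : ReducesTo (mobius M τ) (mobius M a) :=
  (((intCast _).mul h).add (intCast _)).div (((intCast _).mul h).add (intCast _)) ha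

lemma ReducesTo.basicUnit (h : ReducesTo τ a) (ha : 3 * a ≠ 0) :
    ReducesTo (basicUnit τ) (basicUnit a) := by
  have h3 := (intCast (q := q) 3).mul h
  have h1 := h.add (intCast 1)
  push_cast at h1 h3
  exact (h1.pow 2).div h3 ha

variable (hq : ∀ r, (smallPrime r : ZMod q) ≠ 0) (h : ReducesTo τ (-2)) (d : DihedralGroup 6)
include hq h

lemma ReducesTo.dihedralMobius :
    ReducesTo (dihedralMobius d τ) (dihedralMobius d (-2)) :=
  h.mobius (mobiusMatrix_denom_neg_two_ne_zero hq d)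

lemma exists_reducesTo_dihedralMobius_add_two_zpow {m : ℤ} (hm : d = 1 → m = 0) :
    ∃ x : ZMod q, x ^ 2 = (∏ r, (smallPrime r : ZMod q) ^ shiftExponent d r) ^ 2 ∧
      ReducesTo ((dihedralMobius d τ + 2) ^ m) (x ^ m) := by
  by_cases hd : d = 1
  · refine ⟨∏ r, (smallPrime r : ZMod q) ^ shiftExponent d r, rfl, ?_⟩
    simpa [hm hd] using ReducesTo.intCast (q := q) 1
  · have hsq := sq_dihedralMobius_neg_two_add_two hq hd
    refine ⟨_, hsq, .zpow ?_ ?_ m⟩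
    · simpa using (h.dihedralMobius hq d).add (.intCast 2)
    · exact pow_ne_zero_iff two_ne_zero |>.mp <|
        hsq ▸ pow_ne_zero 2 (prod_smallPrime_zpow_ne_zero hq _)

lemma exists_reducesTo_basicUnit_zpow (m : ℤ) :
    ∃ x : ZMod q, x ^ 2 = (∏ r, (smallPrime r : ZMod q) ^ unitExponent d r) ^ 2 ∧
      ReducesTo (basicUnit (dihedralMobius d τ) ^ m) (x ^ m) := by
  have hsq := sq_basicUnit_dihedralMobius_neg_two hq d
  have hne : basicUnit (dihedralMobius d (-2 : ZMod q)) ≠ 0 :=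
    pow_ne_zero_iff two_ne_zero |>.mp <| hsq ▸ pow_ne_zero 2 (prod_smallPrime_zpow_ne_zero hq _)
  exact ⟨_, hsq, ((h.dihedralMobius hq d).basicUnit (div_ne_zero_iff.mp hne).2).zpow hne m⟩

end Reduction

section RootProduct

lemma prod_dihedralGroup_six {M : Type*} [CommMonoid M] (f : DihedralGroup 6 → M) :
    ∏ d, f d = (∏ i : Fin 6, f (.r i)) * ∏ i : Fin 6, f (.sr i) :=
  (DihedralGroup.equivSum.symm.prod_comp f).symm.trans (Fintype.prod_sum_type _)

variable {F : Type*} [Field F]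

lemma prod_mobiusMatrix_denom (t : F) :
    ∏ d, (mobiusMatrix d 1 0 * t + mobiusMatrix d 1 1) = -sexticForm t 1 ^ 2 := by
  rw [prod_dihedralGroup_six, Fin.prod_univ_six, Fin.prod_univ_six]
  simp [mobiusMatrix, sexticForm]
  ring

lemma prod_mobiusMatrix_num_add_two_mul_denom (t : F) :
    ∏ d, ((mobiusMatrix d 0 0 * t + mobiusMatrix d 0 1) +
        2 * (mobiusMatrix d 1 0 * t + mobiusMatrix d 1 1)) =
      14400 * quadForm t 1 ^ 6 - 7 ^ 6 * sexticForm t 1 ^ 2 := by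
  rw [prod_dihedralGroup_six, Fin.prod_univ_six, Fin.prod_univ_six]
  simp [mobiusMatrix, quadForm, sexticForm]
  ring

lemma prod_dihedralMobius_add_two {k : ℤ} {t : F} (h : aeval t (dihedralPoly k) = 0)
    (ht : ∀ d, mobiusMatrix d 1 0 * t + mobiusMatrix d 1 1 ≠ 0) :
    ∏ d, (dihedralMobius d t + 2) = 7 ^ 6 + 388800 * k := by
  have hS : -sexticForm t 1 ^ 2 ≠ 0 := by
    rw [← prod_mobiusMatrix_denom]
    exact Finset.prod_ne_zero_iff.mpr fun d _ => ht d
  have hdiv (d : DihedralGroup 6) : dihedralMobius d t + 2 =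
      ((mobiusMatrix d 0 0 * t + mobiusMatrix d 0 1) +
        2 * (mobiusMatrix d 1 0 * t + mobiusMatrix d 1 1)) /
          (mobiusMatrix d 1 0 * t + mobiusMatrix d 1 1) :=
    div_add' _ _ _ (ht d)
  rw [Finset.prod_congr rfl fun d _ => hdiv d, Finset.prod_div_distrib,
    prod_mobiusMatrix_num_add_two_mul_denom, prod_mobiusMatrix_denom, div_eq_iff hS]
  rw [aeval_dihedralPoly] at h
  linear_combination 14400 * h

lemma basicUnit_equation {k : ℤ} {t : F} (h : aeval t (dihedralPoly k) = 0) (ht : 3 * t ≠ 0) :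
    (basicUnit t - 1) ^ 6 +
      k * basicUnit t * (3 * basicUnit t - 4) * (2 * basicUnit t - 3) ^ 2 = 0 := by
  rw [aeval_dihedralPoly, quadForm, sexticForm] at h
  have h3 : (3 : F) ≠ 0 := left_ne_zero_of_mul ht
  have ht0 : t ≠ 0 := right_ne_zero_of_mul ht
  rw [basicUnit]
  field_simp
  linear_combination h

end RootProduct

section Derivative

variable {R : Type*} [CommRing R] (k : ℤ)

lemma aeval_neg_two_dihedralPoly :
    aeval (-2 : R) (dihedralPoly k) = 7 ^ 6 + 388800 * k := by
  rw [aeval_dihedralPoly, quadForm, sexticForm]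
  ring

lemma sixty_mul_aeval_neg_two_derivative_dihedralPoly :
    60 * aeval (-2 : R) (derivative (dihedralPoly k)) =
      7 ^ 5 * 286 - 298 * (7 ^ 6 + 388800 * k) := by
  simp [dihedralPoly, quadForm, sexticForm, derivative_pow, map_ofNat]
  ring

end Derivative

section Fields

variable {E : Type*} [Field E] [NumberField E] {pb : PowerBasis ℚ E} {n y k : ℕ}

lemma IsAdmissible.pow_ne_zero (hy : IsAdmissible n y k) : y ^ n ≠ 0 := by
  rw [hy.pow_eq]
  positivity

lemma IsAdmissible.ne_zero (hy : IsAdmissible n y k) : n ≠ 0 := by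
  rintro rfl
  have := hy.pow_eq
  lia

lemma IsAdmissible.dvd_of_dvd (hy : IsAdmissible n y k) {q : ℕ} (hq : q ∣ y) :
    q ∣ 7 ^ 6 + 388800 * k :=
  hy.pow_eq ▸ dvd_pow hq hy.ne_zero

lemma IsDihedralGen.exists_ringHom_reducesTo_neg_two (h : IsDihedralGen pb k)
    (hy : IsAdmissible n y k) {q : ℕ} [Fact q.Prime] (hq : q ∣ y) :
    ∃ σ : E →+* ℚ_[q], ReducesTo (σ pb.gen) (-2) := by
  have hroot : (7 ^ 6 + 388800 * (k : ℤ) : ZMod q) = 0 := by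
    exact_mod_cast (ZMod.natCast_eq_zero_iff _ _).mpr (hy.dvd_of_dvd hq)
  refine exists_ringHom_reducesTo pb (h ▸ minpoly.irreducible pb.isIntegral_gen) h.aeval_gen
    (by rw [aeval_neg_two_dihedralPoly, hroot]) fun hderiv => ?_
  have hzero := sixty_mul_aeval_neg_two_derivative_dihedralPoly (R := ZMod q) k
  rw [hderiv, hroot] at hzero
  have hne := natCast_smallPrime_ne_zero hy.coprime hq
  have : (7 ^ 5 * (2 * 11 * 13) : ZMod q) ≠ 0 :=
    mul_ne_zero (pow_ne_zero 5 (hne 3)) (mul_ne_zero (mul_ne_zero (hne 0) (hne 4)) (hne 5))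
  exact this (by linear_combination -hzero)

lemma IsDihedralGen.prod_dihedralMobius_gen_add_two (h : IsDihedralGen pb k)
    (hy : IsAdmissible n y k) : ∏ d, (dihedralMobius d pb.gen + 2) = (y : E) ^ n := by
  rw [prod_dihedralMobius_add_two h.aeval_gen h.mobiusMatrix_denom_ne_zero]
  exact_mod_cast hy.pow_eq.symm

lemma IsDihedralGen.dihedralMobius_gen_add_two_ne_zero (h : IsDihedralGen pb k)
    (hy : IsAdmissible n y k) (d : DihedralGroup 6) : dihedralMobius d pb.gen + 2 ≠ 0 := by
  have hprod : ∏ d, (dihedralMobius d pb.gen + 2) ≠ 0 := by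
    rw [h.prod_dihedralMobius_gen_add_two hy]
    exact_mod_cast hy.pow_ne_zero
  exact Finset.prod_ne_zero_iff.mp hprod d (Finset.mem_univ d)

-- Dividing by a power of `y ^ n` removes the factor `d = 1`, which has no residue: it vanishes at
-- `-2`.
lemma IsDihedralGen.exists_pow_eq_prod_sub (h : IsDihedralGen pb k) (hy : IsAdmissible n y k)
    {p : ℕ} (hpn : p ∣ n) {c : DihedralGroup 6 → ℤ} {α β : E}
    (hα : α ^ p = (∏ d, (dihedralMobius d pb.gen + 2) ^ c d) * β) :
    ∃ α' : E, α' ^ p = (∏ d, (dihedralMobius d pb.gen + 2) ^ (c d - c 1)) * β := by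
  obtain ⟨m, rfl⟩ := hpn
  refine ⟨α / (y : E) ^ (m * c 1), ?_⟩
  have hpow : ((y : E) ^ (m * c 1)) ^ p = ∏ d, (dihedralMobius d pb.gen + 2) ^ c 1 := by
    rw [Finset.prod_zpow, h.prod_dihedralMobius_gen_add_two hy, ← zpow_natCast, ← zpow_natCast,
      ← zpow_mul, ← zpow_mul]
    congr 1
    push_cast
    ring
  rw [div_pow, hα, hpow, mul_div_right_comm, ← Finset.prod_div_distrib]
  exact congrArg (· * β) <| Finset.prod_congr rfl fun d _ =>
    (zpow_sub₀ (h.dihedralMobius_gen_add_two_ne_zero hy d) _ _).symm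

lemma IsDihedralGen.dvd_sum_shiftExponent_add_sum_unitExponent (h : IsDihedralGen pb k)
    (hy : IsAdmissible n y k) {p : ℕ} (hp : p.Prime) (hp2 : Odd p) (hpn : p ∣ n)
    (c e : DihedralGroup 6 → ℤ) (α : E)
    (hα : α ^ p = (∏ d, (dihedralMobius d pb.gen + 2) ^ c d) *
      ∏ d, basicUnit (dihedralMobius d pb.gen) ^ e d) (r : Fin 6) :
    (p : ℤ) ∣ ∑ d, (c d - c 1) * shiftExponent d r + ∑ d, e d * unitExponent d r := by
  obtain ⟨α', hα'⟩ := h.exists_pow_eq_prod_sub hy hpn hα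
  have key := (hy.detects p hp hpn).dvd_sum hp2 (Sum.elim (fun d => c d - c 1) e)
    (Sum.elim shiftExponent unitExponent) (fun q hq hqp => ?_) r
  · simpa only [Fintype.sum_sum_type, Sum.elim_inl, Sum.elim_inr] using key
  have hne := natCast_smallPrime_ne_zero hy.coprime hq.2
  obtain ⟨σ, hσ⟩ := h.exists_ringHom_reducesTo_neg_two hy hq.2
  have hc (d : DihedralGroup 6) (hd : d = 1) : c d - c 1 = 0 := by rw [hd, sub_self]
  choose x hx hxr using fun d => exists_reducesTo_dihedralMobius_add_two_zpow hne hσ d (hc d)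
  choose z hz hzr using fun d => exists_reducesTo_basicUnit_zpow hne hσ d (e d)
  refine ⟨hne, Sum.elim x z, Sum.rec hx hz, ReducesTo.exists_pow_eq (z := σ α') hp.pos ?_⟩
  rw [← map_pow, hα']
  simp only [map_mul, map_prod, map_zpow₀, map_add, map_basicUnit, map_dihedralMobius, map_ofNat,
    Fintype.prod_sum_type, Sum.elim_inl, Sum.elim_inr]
  exact (ReducesTo.prod _ fun d _ => hxr d).mul (ReducesTo.prod _ fun d _ => hzr d)

end Fields

end LocalRelations

section Independence

section LinearAlgebra

variable {R : Type*} [CommRing R]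

lemma sum_dihedralGroup_six {M : Type*} [AddCommMonoid M] (f : DihedralGroup 6 → M) :
    ∑ d, f d = (∑ i : Fin 6, f (.r i)) + ∑ i : Fin 6, f (.sr i) :=
  prod_dihedralGroup_six (M := Multiplicative M) f

section Columns

variable (f : DihedralGroup 6 → R)

lemma sum_mul_shiftExponent_three :
    ∑ d, f d * shiftExponent d 3 = f (.r 1) + f (.r 2) + f (.r 3) + f (.r 4) + f (.r 5) := by
  rw [sum_dihedralGroup_six, Fin.sum_univ_six, Fin.sum_univ_six]
  simp [shiftExponent]
  rfl

lemma sum_mul_shiftExponent_four : ∑ d, f d * shiftExponent d 4 = f (.sr 1) := by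
  rw [sum_dihedralGroup_six, Fin.sum_univ_six, Fin.sum_univ_six]
  simp [shiftExponent]
  rfl

lemma sum_mul_shiftExponent_five : ∑ d, f d * shiftExponent d 5 = f (.sr 3) := by
  rw [sum_dihedralGroup_six, Fin.sum_univ_six, Fin.sum_univ_six]
  simp [shiftExponent]
  rfl

lemma unitExponent_eq_zero {r : Fin 6} (hr : 3 ≤ r) (d : DihedralGroup 6) :
    unitExponent d r = 0 := by
  revert d r
  decide

lemma sum_mul_unitExponent_two : ∑ d, f d * unitExponent d 2 =
    -f (.r 3) + f (.r 4) * 2 + -f (.r 5) + (-f (.sr 1) + f (.sr 2) * 2 + -f (.sr 3)) := by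
  rw [sum_dihedralGroup_six, Fin.sum_univ_six, Fin.sum_univ_six]
  simp [unitExponent]
  rfl

end Columns

variable [NoZeroDivisors R]

lemma eq_zero_of_second_difference_eq_zero (h2 : (2 : R) ≠ 0) (h3 : (3 : R) ≠ 0) {a : ZMod 6 → R}
    (h0 : a 0 = 0) (ha : ∀ i, 2 * a (i + 1) - a i - a (i + 2) = 0) (i : ZMod 6) : a i = 0 := by
  have hlin (j : ℕ) : a j = j * a 1 ∧ a (j + 1) = (j + 1) * a 1 := by
    induction j with
    | zero => simp [h0]
    | succ j ih =>
      have := ha j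
      push_cast
      refine ⟨ih.2, ?_⟩
      rw [add_assoc, one_add_one_eq_two]
      linear_combination 2 * ih.2 - ih.1 - this
  have h6 : 2 * 3 * a 1 = 0 := by
    have := (hlin 6).1
    rw [show ((6 : ℕ) : ZMod 6) = 0 from rfl, h0] at this
    push_cast at this
    linear_combination -this
  have h1 : a 1 = 0 := (mul_eq_zero.mp h6).resolve_left (mul_ne_zero h2 h3)
  rw [← ZMod.natCast_zmod_val i, (hlin _).1, h1, mul_zero]

lemma eq_const_of_shift_relations (h3 : (3 : R) ≠ 0) {C : DihedralGroup 6 → R}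
    (hC : ∀ g, ∀ r ≥ 3, ∑ d, (C (g * d) - C g) * shiftExponent d r = 0) (d : DihedralGroup 6) :
    C d = C 1 := by
  let S : Submonoid (DihedralGroup 6) :=
    { carrier := {d | ∀ g, C (g * d) = C g}
      one_mem' := fun g => by rw [mul_one]
      mul_mem' := fun {a b} ha hb g => by rw [← mul_assoc, hb, ha] }
  have hsr1 : .sr 1 ∈ S := fun g => by
    simpa only [sum_mul_shiftExponent_four, sub_eq_zero] using hC g 4 (by decide)
  have hsr3 : .sr 3 ∈ S := fun g => by
    simpa only [sum_mul_shiftExponent_five, sub_eq_zero] using hC g 5 (by decide)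
  have hr2 : .r 2 ∈ S := S.mul_mem hsr1 hsr3
  have hr4 : .r 4 ∈ S := S.mul_mem hr2 hr2
  have hr1 : .r 1 ∈ S := fun g => by
    have hsum := hC g 3 (by decide)
    have h3' : C (g * .r 3) = C (g * .r 1) := by rw [← hr2 (g * .r 1), mul_assoc]; rfl
    have h5' : C (g * .r 5) = C (g * .r 1) := by rw [← hr4 (g * .r 1), mul_assoc]; rfl
    rw [sum_mul_shiftExponent_three, hr2 g, hr4 g, h3', h5'] at hsum
    refine sub_eq_zero.mp ((mul_eq_zero.mp ?_).resolve_left h3)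
    linear_combination hsum
  have hr (i : ZMod 6) : .r i ∈ S := by
    rw [← ZMod.natCast_zmod_val i, ← DihedralGroup.r_one_pow]
    exact S.pow_mem hr1 _
  have hd : d ∈ S := by
    rcases d with i | i
    · exact hr i
    · simpa using S.mul_mem hsr1 (hr (i - 1))
  simpa only [one_mul] using hd 1

-- The primes `7`, `11`, `13` see only the exponents `C`, and then `5` determines `E`.
lemma eq_const_and_eq_zero_of_relations (h2 : (2 : R) ≠ 0) (h3 : (3 : R) ≠ 0)
    {C E : DihedralGroup 6 → R} (hE1 : E 1 = 0) (hEsr : ∀ i, E (.sr i) = 0)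
    (H : ∀ g r, ∑ d, (C (g * d) - C g) * shiftExponent d r + ∑ d, E (g * d) * unitExponent d r =
      0) :
    (∀ d, C d = C 1) ∧ ∀ d, E d = 0 := by
  have hC : ∀ d, C d = C 1 := eq_const_of_shift_relations h3 fun g r hr => by
    simpa [unitExponent_eq_zero hr] using H g r
  have hEr : ∀ i, E (.r i) = 0 := by
    refine eq_zero_of_second_difference_eq_zero h2 h3 hE1 fun i => ?_
    have hrel := H (.r (i - 3)) 2
    rw [Finset.sum_eq_zero fun d _ => by rw [hC, hC (.r _), sub_self, zero_mul], zero_add,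
      sum_mul_unitExponent_two fun d => E (.r (i - 3) * d)] at hrel
    simp only [DihedralGroup.r_mul_r, DihedralGroup.r_mul_sr, hEsr, zero_mul, neg_zero,
      add_zero] at hrel
    rw [show i - 3 + 3 = i by ring, show i - 3 + 4 = i + 1 by ring,
      show i - 3 + 5 = i + 2 by ring] at hrel
    linear_combination hrel
  exact ⟨hC, fun | .r i => hEr i | .sr i => hEsr i⟩

end LinearAlgebra

variable {E : Type*} [Field E] [NumberField E] {pb : PowerBasis ℚ E} {n y k p : ℕ}

lemma IsDihedralGen.exists_pow_eq_prod_mul_left (h : IsDihedralGen pb k)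
    {c e : DihedralGroup 6 → ℤ} {α : E}
    (hα : α ^ p = (∏ d, (dihedralMobius d pb.gen + 2) ^ c d) *
      ∏ d, basicUnit (dihedralMobius d pb.gen) ^ e d) (g : DihedralGroup 6) :
    ∃ β : E, β ^ p = (∏ d, (dihedralMobius d pb.gen + 2) ^ c (g * d)) *
      ∏ d, basicUnit (dihedralMobius d pb.gen) ^ e (g * d) := by
  obtain ⟨ρ, hρ⟩ := h.exists_galEquiv
  have hact (d : DihedralGroup 6) :
      (ρ g⁻¹ : E →+* E) (dihedralMobius (g * d) pb.gen) = dihedralMobius d pb.gen := by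
    rw [map_dihedralMobius, RingHom.coe_coe, hρ,
      ← dihedralMobius_mul _ (h.mobiusMatrix_denom_ne_zero _), inv_mul_cancel_left]
  refine ⟨(ρ g⁻¹ : E →+* E) α, ?_⟩
  have reindex (f : DihedralGroup 6 → E) : ∏ d, f d = ∏ d, f (g * d) :=
    (Equiv.prod_comp (Equiv.mulLeft g) f).symm
  rw [← map_pow, hα, reindex fun d => (dihedralMobius d pb.gen + 2) ^ c d,
    reindex fun d => basicUnit (dihedralMobius d pb.gen) ^ e d]
  simp only [map_mul, map_prod, map_zpow₀, map_add, map_basicUnit, hact, map_ofNat]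

theorem IsDihedralGen.dvd_sub_and_dvd_of_pow_eq_prod (h : IsDihedralGen pb k)
    (hy : IsAdmissible n y k) (hn6 : n.Coprime 6) (hp : p.Prime) (hpn : p ∣ n)
    {c e : DihedralGroup 6 → ℤ} (he1 : e 1 = 0) (hesr : ∀ i, e (.sr i) = 0) {α : E}
    (hα : α ^ p = (∏ d, (dihedralMobius d pb.gen + 2) ^ c d) *
      ∏ d, basicUnit (dihedralMobius d pb.gen) ^ e d) :
    (∀ d, (p : ℤ) ∣ c d - c 1) ∧ ∀ d, (p : ℤ) ∣ e d := by
  have := Fact.mk hp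
  have hp6 : p.Coprime (2 * 3) := hn6.coprime_dvd_left hpn
  have h2 : ((2 : ℕ) : ZMod p) ≠ 0 :=
    ((ZMod.isUnit_iff_coprime 2 p).mpr hp6.coprime_mul_right_right.symm).ne_zero
  have h3 : ((3 : ℕ) : ZMod p) ≠ 0 :=
    ((ZMod.isUnit_iff_coprime 3 p).mpr hp6.coprime_mul_left_right.symm).ne_zero
  have hrel (g : DihedralGroup 6) (r : Fin 6) :
      ∑ d, ((c (g * d) : ZMod p) - c g) * shiftExponent d r +
        ∑ d, (e (g * d) : ZMod p) * unitExponent d r = 0 := by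
    obtain ⟨β, hβ⟩ := h.exists_pow_eq_prod_mul_left hα g
    have := h.dvd_sum_shiftExponent_add_sum_unitExponent hy hp
      (Nat.coprime_two_right.mp hp6.coprime_mul_right_right) hpn _ _ β hβ r
    rw [← ZMod.intCast_zmod_eq_zero_iff_dvd] at this
    push_cast at this
    simpa only [mul_one] using this
  have key := eq_const_and_eq_zero_of_relations (by exact_mod_cast h2) (by exact_mod_cast h3)
    (C := fun d => (c d : ZMod p)) (E := fun d => (e d : ZMod p)) (by simp [he1]) (by simp [hesr])
    hrel
  refine ⟨fun d => ?_, fun d => (ZMod.intCast_zmod_eq_zero_iff_dvd _ _).mp (key.2 d)⟩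
  rw [← ZMod.intCast_zmod_eq_zero_iff_dvd, Int.cast_sub, sub_eq_zero]
  exact key.1 d

end Independence

section PowerRelations

lemma dvd_of_prod_pow_eq_one {M ι : Type*} [CommGroup M] [Fintype ι] {n : ℕ}
    (hn : n ≠ 0) {g : ι → M}
    (hg : ∀ p, p.Prime → ∀ m, p * m = n → ∀ c : ι → ℕ, (∏ i, g i ^ c i) ^ m = 1 → ∀ i, p ∣ c i)
    {c : ι → ℕ} (hc : ∏ i, g i ^ c i = 1) (i : ι) : n ∣ c i := by
  suffices ∀ d, d ∣ n → ∀ i, d ∣ c i from this n dvd_rfl i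
  intro d
  induction d using induction_on_primes with
  | zero => exact fun h => absurd (zero_dvd_iff.mp h) hn
  | one => exact fun _ _ => one_dvd _
  | prime_mul p a hp ih =>
    rintro ⟨m, hm⟩
    choose c' hc' using ih ⟨p * m, by rw [hm]; ring⟩
    have hroot : (∏ i, g i ^ c' i) ^ (a * m) = 1 := by
      rw [pow_mul, ← Finset.prod_pow]
      simp only [← pow_mul, mul_comm _ a, ← hc', hc, one_pow]
    intro i
    rw [hc', mul_comm p]
    exact mul_dvd_mul_left a (hg p hp (a * m) (by rw [hm]; ring) c' hroot i)

lemma hasZModRankGE_of_forall_prime {M ι : Type*} [CommGroup M] [Fintype ι] {n : ℕ} (hn : n ≠ 0)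
    {g : ι → M} (hgn : ∀ i, g i ^ n = 1)
    (hg : ∀ p, p.Prime → ∀ m, p * m = n → ∀ c : ι → ℕ, (∏ i, g i ^ c i) ^ m = 1 → ∀ i, p ∣ c i) :
    HasZModRankGE M n (Fintype.card ι) := by
  have : NeZero n := ⟨hn⟩
  let e := Fintype.equivFin ι
  let φ : Multiplicative (Fin (Fintype.card ι) → ZMod n) →* M :=
    MonoidHom.mk' (fun x => ∏ i, g i ^ (x.toAdd (e i)).val) fun x y => by
      simp only [toAdd_mul, Pi.add_apply, ZMod.val_add, ← pow_eq_pow_mod _ (hgn _), pow_add,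
        Finset.prod_mul_distrib]
  refine ⟨φ, (injective_iff_map_eq_one φ).mpr fun x hx => ?_⟩
  have hdvd := dvd_of_prod_pow_eq_one hn hg hx
  have hzero (i : ι) : x.toAdd (e i) = 0 := by
    rw [← ZMod.natCast_zmod_val (x.toAdd _)]
    exact (ZMod.natCast_eq_zero_iff _ _).mpr (hdvd i)
  exact congrArg Multiplicative.ofAdd (funext (e.surjective.forall.mpr hzero))

section Generation

variable {ι κ : Type*} [Fintype ι] [Fintype κ] {p : ℕ} [Fact p.Prime]

lemma exists_eq_sum_zsmul {V : Type*} [AddCommGroup V] [Module (ZMod p) V]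
    (hcard : Fintype.card ι = Fintype.card κ) {f : κ → V}
    (hf : ∀ v, ∃ e : κ → ℤ, v = ∑ j, e j • f j) {u : ι → V}
    (hu : ∀ e : ι → ℤ, ∑ i, e i • u i = 0 → ∀ i, (p : ℤ) ∣ e i) (v : V) :
    ∃ e : ι → ℤ, v = ∑ i, e i • u i := by
  have hspan : Submodule.span (ZMod p) (Set.range f) = ⊤ := by
    rw [eq_top_iff]
    intro v _
    obtain ⟨e, rfl⟩ := hf v
    exact sum_mem fun j _ => zsmul_mem (Submodule.subset_span (Set.mem_range_self j)) _
  have : Module.Finite (ZMod p) V := .of_fg_top <| hspan ▸ Submodule.fg_span (Set.finite_range f)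
  have hind : LinearIndependent (ZMod p) u := by
    rw [Fintype.linearIndependent_iff]
    intro a ha i
    obtain ⟨e, rfl⟩ := ZMod.intCast_surjective.comp_left a
    simp only [Function.comp_apply, Int.cast_smul_eq_zsmul] at ha
    exact (ZMod.intCast_zmod_eq_zero_iff_dvd _ _).mpr (hu e ha i)
  have hspan' := hind.span_eq_top_of_card_eq_finrank' <| hind.fintype_card_le_finrank.antisymm <| by
    rw [hcard, ← finrank_top, ← hspan]
    exact finrank_range_le_card f
  obtain ⟨a, ha⟩ := Submodule.mem_span_range_iff_exists_fun (ZMod p) |>.mp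
    (hspan' ▸ Submodule.mem_top : v ∈ Submodule.span (ZMod p) (Set.range u))
  obtain ⟨e, rfl⟩ := ZMod.intCast_surjective.comp_left a
  simp only [Function.comp_apply, Int.cast_smul_eq_zsmul] at ha
  exact ⟨e, ha.symm⟩

lemma exists_eq_pow_mul_prod_zpow {G : Type*} [CommGroup G]
    (hcard : Fintype.card ι = Fintype.card κ) {f : κ → G}
    (hf : ∀ x, ∃ (ζ : G) (e : κ → ℤ), x = ζ ^ p * ∏ j, f j ^ e j) {u : ι → G}
    (hu : ∀ (η : G) (e : ι → ℤ), η ^ p = ∏ i, u i ^ e i → ∀ i, (p : ℤ) ∣ e i) (x : G) :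
    ∃ (ζ : G) (e : ι → ℤ), x = ζ ^ p * ∏ i, u i ^ e i := by
  let V := Additive (G ⧸ (powMonoidHom p : G →* G).range)
  let mk (x : G) : V := .ofMul x
  have mk_eq {x z : G} : mk x = mk z ↔ ∃ ζ, x = ζ ^ p * z := by
    rw [Additive.ofMul.injective.eq_iff, eq_comm, QuotientGroup.eq]
    exact exists_congr fun ζ => by rw [powMonoidHom_apply, eq_inv_mul_iff_mul_eq, mul_comm, eq_comm]
  have mk_surjective : Function.Surjective mk := QuotientGroup.mk_surjective
  let _ := AddCommGroup.zmodModule (n := p) <| mk_surjective.forall.mpr fun x =>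
    mk_eq.mpr ⟨x, (mul_one _).symm⟩
  have mk_prod_f (e : κ → ℤ) : mk (∏ j, f j ^ e j) = ∑ j, e j • mk (f j) := by simp [mk]
  have mk_prod_u (e : ι → ℤ) : mk (∏ i, u i ^ e i) = ∑ i, e i • mk (u i) := by simp [mk]
  obtain ⟨e, he⟩ := exists_eq_sum_zsmul (p := p) hcard (f := mk ∘ f) (u := mk ∘ u)
    (mk_surjective.forall.mpr fun x => (hf x).rec fun ζ ⟨e, he⟩ =>
      ⟨e, (mk_eq.mpr ⟨ζ, he⟩).trans (mk_prod_f e)⟩)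
    (fun e he i => by
      obtain ⟨η, hη⟩ := mk_eq.mp ((mk_prod_u e).trans he : _ = mk 1)
      exact hu η e (by rw [hη, mul_one]) i) (mk x)
  obtain ⟨ζ, hζ⟩ := mk_eq.mp (he.trans (mk_prod_u e).symm)
  exact ⟨ζ, e, hζ⟩

end Generation

end PowerRelations

section IdealPowers

-- Taylor expansion at `a` makes `bⁿ` a product of `t - a` and a coprime factor.
lemma exists_span_sub_eq_pow {R : Type*} [CommRing R] [IsDedekindDomain R] {F : R[X]} {t a b : R}
    {n : ℕ} (ht : F.eval t = 0) (hab : F.eval a = b ^ n)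
    (hcop : IsCoprime (F.eval a) (F.derivative.eval a)) :
    ∃ I : Ideal R, Ideal.span {t - a} = I ^ n := by
  classical
  obtain ⟨z, hz⟩ := F.binomExpansion a (t - a)
  rw [add_sub_cancel, ht] at hz
  have hmul : (t - a) * -(F.derivative.eval a + z * (t - a)) = b ^ n := by
    linear_combination hz + hab
  have hcop' : IsCoprime (t - a) (-(F.derivative.eval a + z * (t - a))) := by
    rw [IsCoprime.neg_right_iff, IsCoprime.add_mul_right_right_iff]
    exact hcop.of_isCoprime_of_dvd_left ⟨_, hab.trans hmul.symm⟩
  refine exists_eq_pow_of_mul_eq_pow_of_coprime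
    ((Ideal.isCoprime_span_singleton_iff _ _).mpr hcop') (c := Ideal.span {b}) ?_
  rw [Ideal.span_singleton_mul_span_singleton, Ideal.span_singleton_pow, hmul]

variable {n y k : ℕ}

lemma IsAdmissible.aeval_neg_two_eq_pow (hy : IsAdmissible n y k) (R : Type*) [CommRing R] :
    aeval (-2 : R) (dihedralPoly k) = (y : R) ^ n := by
  rw [aeval_neg_two_dihedralPoly]
  exact_mod_cast congrArg _ hy.pow_eq.symm

lemma IsAdmissible.isCoprime_aeval_neg_two (hy : IsAdmissible n y k) (R : Type*) [CommRing R] :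
    IsCoprime (aeval (-2 : R) (dihedralPoly k))
      (aeval (-2 : R) (derivative (dihedralPoly k))) := by
  have hderiv := sixty_mul_aeval_neg_two_derivative_dihedralPoly (R := R) k
  rw [← aeval_neg_two_dihedralPoly, sub_eq_add_neg, ← neg_mul] at hderiv
  have hcop : IsCoprime (aeval (-2 : R) (dihedralPoly k)) (7 ^ 5 * 286) := by
    have h30030 : IsCoprime ((y : R) ^ n) (30030 : R) := by exact_mod_cast hy.coprime.cast.pow_left
    rw [hy.aeval_neg_two_eq_pow]
    exact (h30030.pow_right (n := 5)).of_isCoprime_of_dvd_right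
      ⟨286 ^ 4 * 15 ^ 5, by norm_num⟩
  refine IsCoprime.of_mul_right_right (y := 60) ?_
  rw [hderiv]
  exact IsCoprime.add_mul_right_right hcop _

end IdealPowers

section Units

lemma isUnit_of_aeval_eq_zero {R A : Type*} [CommRing R] [CommRing A] [Algebra R A] {F : R[X]}
    {u : A} (hu : aeval u F = 0) (hF : IsUnit (F.coeff 0)) : IsUnit u := by
  rw [← F.divX_mul_X_add, map_add, map_mul, aeval_X, aeval_C] at hu
  exact isUnit_of_mul_isUnit_right (eq_neg_of_add_eq_zero_left hu ▸ (hF.map (algebraMap R A)).neg)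

/-- The polynomial annihilating the basic units attached to the roots of `dihedralPoly k`. -/
noncomputable def basicUnitPoly (k : ℤ) : ℤ[X] :=
  (X - 1) ^ 6 + C k * X * (3 * X - 4) * (2 * X - 3) ^ 2

lemma basicUnitPoly_monic (k : ℤ) : (basicUnitPoly k).Monic := by
  have hlow : (C k * X * (3 * X - 4) * (2 * X - 3) ^ 2 : ℤ[X]).natDegree ≤ 4 := by compute_degree
  have hmonic : ((X - 1) ^ 6 : ℤ[X]).Monic := (monic_X_sub_C 1).pow 6
  have hdeg : ((X - 1) ^ 6 : ℤ[X]).natDegree = 6 := by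
    rw [natDegree_pow, ← C_1, natDegree_X_sub_C]
  refine hmonic.add_of_left (degree_lt_degree ?_)
  lia

lemma basicUnitPoly_coeff_zero (k : ℤ) : (basicUnitPoly k).coeff 0 = 1 := by
  simp [basicUnitPoly, coeff_zero_eq_eval_zero]

lemma aeval_basicUnitPoly {k : ℤ} {F : Type*} [Field F] {t : F}
    (h : aeval t (dihedralPoly k) = 0) (ht : 3 * t ≠ 0) :
    aeval (basicUnit t) (basicUnitPoly k) = 0 := by
  simpa [basicUnitPoly, map_ofNat] using basicUnit_equation h ht

end Units

section Conjugates

variable {E : Type*} [Field E] [NumberField E] {pb : PowerBasis ℚ E} {n y k p : ℕ}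

lemma IsAdmissible.pos (hy : IsAdmissible n y k) : 0 < k := by
  have := hy.mod_four
  lia

namespace IsDihedralGen

lemma aeval_dihedralMobius (h : IsDihedralGen pb k) (d : DihedralGroup 6) :
    aeval (dihedralMobius d pb.gen) (dihedralPoly k) = 0 :=
  aeval_dihedralMobius_eq_zero h.aeval_gen (h.mobiusMatrix_denom_ne_zero d)

/-- The conjugate of the generator attached to `d`, as an algebraic integer. -/
noncomputable def conjugate (h : IsDihedralGen pb k) (d : DihedralGroup 6) : 𝓞 E :=
  ⟨dihedralMobius d pb.gen, dihedralPoly k, dihedralPoly_monic k, h.aeval_dihedralMobius d⟩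

lemma algebraMap_conjugate (h : IsDihedralGen pb k) (d : DihedralGroup 6) :
    algebraMap (𝓞 E) E (h.conjugate d) = dihedralMobius d pb.gen := rfl

lemma aeval_conjugate (h : IsDihedralGen pb k) (d : DihedralGroup 6) :
    aeval (h.conjugate d) (dihedralPoly k) = 0 :=
  RingOfIntegers.coe_injective <| by
    rw [← aeval_algebraMap_apply, map_zero, h.algebraMap_conjugate, h.aeval_dihedralMobius]

lemma conjugate_add_two_ne_zero (h : IsDihedralGen pb k) (hy : IsAdmissible n y k)
    (d : DihedralGroup 6) : h.conjugate d + 2 ≠ 0 := fun h0 =>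
  h.dihedralMobius_gen_add_two_ne_zero hy d <| by
    simpa [h.algebraMap_conjugate, map_ofNat] using congrArg (algebraMap (𝓞 E) E) h0

lemma exists_span_conjugate_add_two_eq_pow (h : IsDihedralGen pb k) (hy : IsAdmissible n y k)
    (d : DihedralGroup 6) : ∃ I : Ideal (𝓞 E), Ideal.span {h.conjugate d + 2} = I ^ n := by
  have hcop := hy.isCoprime_aeval_neg_two (𝓞 E)
  have hpow := hy.aeval_neg_two_eq_pow (𝓞 E)
  rw [← sub_neg_eq_add]
  apply exists_span_sub_eq_pow (F := (dihedralPoly k).map (algebraMap ℤ (𝓞 E))) (b := y)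
  · rw [eval_map_algebraMap, h.aeval_conjugate]
  · rw [eval_map_algebraMap, hpow]
  · rwa [derivative_map, eval_map_algebraMap, eval_map_algebraMap]

lemma three_mul_dihedralMobius_ne_zero (h : IsDihedralGen pb k) (d : DihedralGroup 6) :
    3 * dihedralMobius d pb.gen ≠ 0 := by
  refine mul_ne_zero three_ne_zero fun h0 => ?_
  have hroot := h.aeval_dihedralMobius d
  rw [h0, aeval_dihedralPoly] at hroot
  norm_num [quadForm, sexticForm] at hroot

lemma exists_unit_eq_basicUnit (h : IsDihedralGen pb k) (d : DihedralGroup 6) :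
    ∃ u : (𝓞 E)ˣ, (u : E) = basicUnit (dihedralMobius d pb.gen) := by
  have hroot :=
    aeval_basicUnitPoly (h.aeval_dihedralMobius d) (h.three_mul_dihedralMobius_ne_zero d)
  let v : 𝓞 E := ⟨_, basicUnitPoly k, basicUnitPoly_monic k, hroot⟩
  have hv : aeval v (basicUnitPoly k) = 0 := RingOfIntegers.coe_injective <| by
    rw [← aeval_algebraMap_apply, map_zero]
    exact hroot
  obtain ⟨u, hu⟩ := isUnit_of_aeval_eq_zero hv (by rw [basicUnitPoly_coeff_zero]; exact isUnit_one)
  exact ⟨u, congrArg _ hu⟩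

lemma im_gen_ne_zero (h : IsDihedralGen pb k) (hk : 0 < k) (φ : E →+* ℂ) : (φ pb.gen).im ≠ 0 := by
  intro him
  obtain ⟨x, hx⟩ : ∃ x : ℝ, (x : ℂ) = φ pb.gen := ⟨(φ pb.gen).re, Complex.ext rfl him.symm⟩
  have hroot : aeval (x : ℂ) (dihedralPoly k) = 0 := by
    rw [hx]
    exact (aeval_algHom_apply φ.toIntAlgHom _ _).trans (by rw [h.aeval_gen, map_zero])
  have hreal : aeval x (dihedralPoly k) = 0 := Complex.ofReal_injective <| by
    rw [← Complex.coe_algebraMap, ← aeval_algebraMap_apply, map_zero]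
    exact hroot
  have hquad : 0 < quadForm x 1 := by
    rw [quadForm]
    nlinarith [sq_nonneg (x - 1 / 2)]
  have hpos : 0 < aeval x (dihedralPoly k) := by
    rw [aeval_dihedralPoly, Int.cast_natCast]
    positivity
  exact hpos.ne' hreal

lemma rank_units (h : IsDihedralGen pb k) (hk : 0 < k) : Units.rank E = 5 := by
  have : IsTotallyComplex E := by
    refine ⟨fun v => InfinitePlace.not_isReal_iff_isComplex.mp fun hv => ?_⟩
    exact h.im_gen_ne_zero hk _ (Complex.conj_eq_iff_im.mp
      (RingHom.congr_fun (InfinitePlace.isReal_iff.mp hv) pb.gen))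
  have hcard := InfinitePlace.card_eq_nrRealPlaces_add_nrComplexPlaces E
  have hrank := IsTotallyComplex.finrank E
  rw [h.finrank_eq] at hrank
  rw [IsTotallyComplex.nrRealPlaces_eq_zero] at hcard
  rw [Units.rank]
  lia

end IsDihedralGen

end Conjugates

section UnitGroup

lemma dvd_sub_one_of_isPrimitiveRoot {R : Type*} [CommRing R] [IsDomain R] {p q : ℕ}
    [Fact p.Prime] [Fact q.Prime] (φ : R →+* ZMod q) {z : R} (hz : IsPrimitiveRoot z p)
    (hpq : (p : ZMod q) ≠ 0) : p ∣ q - 1 := by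
  have hpow : φ z ^ p = 1 := by rw [← map_pow, hz.pow_eq_one, map_one]
  have hne : φ z ≠ 1 := by
    intro h1
    have hsum := congrArg φ (hz.geom_sum_eq_zero (Fact.out : p.Prime).one_lt)
    simp only [map_sum, map_pow, h1, one_pow, Finset.sum_const, Finset.card_range, nsmul_one,
      map_zero] at hsum
    exact hpq hsum
  have hz0 : φ z ≠ 0 := fun h0 => zero_ne_one <| by
    rw [← hpow, h0, zero_pow (Fact.out : p.Prime).ne_zero]
  rw [← orderOf_eq_prime hpow hne]
  exact ZMod.orderOf_dvd_card_sub_one hz0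

lemma exists_pow_eq_of_mem_torsion {E : Type*} [Field E] [NumberField E] {p q : ℕ}
    [Fact p.Prime] [Fact q.Prime] (φ : 𝓞 E →+* ZMod q) (hpq : (p : ZMod q) ≠ 0)
    (hqp : (q : ZMod p) ≠ 1) {ζ : (𝓞 E)ˣ} (hζ : ζ ∈ Units.torsion E) : ∃ ξ : (𝓞 E)ˣ, ξ ^ p = ζ := by
  have hcop : (Nat.card (Units.torsion E)).Coprime p := by
    rw [Nat.coprime_comm, (Fact.out : p.Prime).coprime_iff_not_dvd]
    intro hdvd
    obtain ⟨z, hz⟩ := exists_prime_orderOf_dvd_card' p hdvd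
    have hprim : IsPrimitiveRoot ((z : (𝓞 E)ˣ) : 𝓞 E) p := by
      rw [IsPrimitiveRoot.coe_units_iff, IsPrimitiveRoot.coe_submonoidClass_iff, ← hz]
      exact .orderOf z
    have hdvd' := dvd_sub_one_of_isPrimitiveRoot φ hprim hpq
    rw [← ZMod.natCast_eq_zero_iff, Nat.cast_sub (Fact.out : q.Prime).one_le, Nat.cast_one,
      sub_eq_zero] at hdvd'
    exact hqp hdvd'
  obtain ⟨ξ, hξ⟩ := (powCoprime hcop).surjective ⟨ζ, hζ⟩
  exact ⟨ξ, congrArg Subtype.val hξ⟩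

variable {E : Type*} [Field E] [NumberField E] {pb : PowerBasis ℚ E} {n y k p : ℕ}

namespace IsDihedralGen

lemma exists_pow_eq_of_mem_torsion (h : IsDihedralGen pb k) (hy : IsAdmissible n y k)
    (hn6 : n.Coprime 6) [Fact p.Prime] (hpn : p ∣ n) {ζ : (𝓞 E)ˣ} (hζ : ζ ∈ Units.torsion E) :
    ∃ ξ : (𝓞 E)ˣ, ξ ^ p = ζ := by
  obtain ⟨q, hq, hqy, hqn⟩ := hy.exists_prime
  have := Fact.mk hq
  obtain ⟨σ, -⟩ := h.exists_ringHom_reducesTo_neg_two hy hqy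
  have hn : Odd n := Nat.coprime_two_right.mp (Nat.Coprime.coprime_dvd_right (by norm_num) hn6)
  have hqp := natCast_ne_one_of_eq_neg_one hn Fact.out hpn hqn
  refine _root_.exists_pow_eq_of_mem_torsion (residueHom σ) (fun h0 => ?_) hqp hζ
  have hpq : p ∣ q := ((Nat.prime_dvd_prime_iff_eq hq Fact.out).mp
    ((ZMod.natCast_eq_zero_iff _ _).mp h0)).symm.dvd
  have hpq1 : p ∣ q + 1 := hpn.trans <| (ZMod.natCast_eq_zero_iff _ _).mp <| by
    rw [Nat.cast_add, hqn, Nat.cast_one, neg_add_cancel]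
  exact (Fact.out : p.Prime).one_lt.not_ge (Nat.le_of_dvd one_pos ((Nat.dvd_add_right hpq).mp hpq1))

-- Five conjugates of the basic unit are independent modulo `p`-th powers, and five is the unit
-- rank.
lemma exists_unit_eq_pow_mul_prod (h : IsDihedralGen pb k) (hy : IsAdmissible n y k)
    (hn6 : n.Coprime 6) [Fact p.Prime] (hpn : p ∣ n) (ε : (𝓞 E)ˣ) :
    ∃ (ζ : (𝓞 E)ˣ) (e : DihedralGroup 6 → ℤ), e 1 = 0 ∧ (∀ i, e (.sr i) = 0) ∧
      (ε : E) = (ζ : E) ^ p * ∏ d, basicUnit (dihedralMobius d pb.gen) ^ e d := by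
  choose u hu using h.exists_unit_eq_basicUnit
  let extend (e : Fin 5 → ℤ) : DihedralGroup 6 → ℤ
    | .r i => (Fin.cons 0 e : Fin 6 → ℤ) i
    | .sr _ => 0
  have coe_prod (e : Fin 5 → ℤ) : ((∏ i, u (.r i.succ) ^ e i : (𝓞 E)ˣ) : E) =
      ∏ d, basicUnit (dihedralMobius d pb.gen) ^ extend e d := by
    rw [prod_dihedralGroup_six, Fin.prod_univ_succ (n := 5), Units.coe_prod, map_prod]
    have hfirst :
        basicUnit (dihedralMobius (.r (0 : Fin 6)) pb.gen) ^ extend e (.r (0 : Fin 6)) = 1 :=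
      zpow_zero _
    have hsr (i : Fin 6) :
        basicUnit (dihedralMobius (.sr i) pb.gen) ^ extend e (.sr i) = 1 := zpow_zero _
    rw [hfirst, one_mul, Fintype.prod_congr _ _ hsr, Finset.prod_const_one, mul_one]
    exact Fintype.prod_congr _ _ fun i => by
      rw [Units.coe_zpow, hu]
      rfl
  have hgen (x : (𝓞 E)ˣ) : ∃ (ζ : (𝓞 E)ˣ) (e : Fin (Units.rank E) → ℤ),
      x = ζ ^ p * ∏ j, Units.fundSystem E j ^ e j := by
    obtain ⟨⟨ζ, e⟩, hx, -⟩ := Units.exist_unique_eq_mul_prod E x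
    obtain ⟨ξ, hξ⟩ := h.exists_pow_eq_of_mem_torsion hy hn6 hpn ζ.2
    exact ⟨ξ, e, by rw [hξ]; exact hx⟩
  have hind (η : (𝓞 E)ˣ) (e : Fin 5 → ℤ) (he : η ^ p = ∏ i, u (.r i.succ) ^ e i) (i : Fin 5) :
      (p : ℤ) ∣ e i := by
    have hα : ((η : 𝓞 E) : E) ^ p = (∏ d, (dihedralMobius d pb.gen + 2) ^ (0 : ℤ)) *
        ∏ d, basicUnit (dihedralMobius d pb.gen) ^ extend e d := by
      rw [← coe_prod, ← he]
      simp
    exact (h.dvd_sub_and_dvd_of_pow_eq_prod hy hn6 Fact.out hpn (c := fun _ => 0) rfl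
      (fun _ => rfl) hα).2 (.r i.succ)
  obtain ⟨ζ, e, rfl⟩ := exists_eq_pow_mul_prod_zpow (by simp [h.rank_units hy.pos]) hgen hind ε
  refine ⟨ζ, extend e, rfl, fun _ => rfl, ?_⟩
  rw [← coe_prod]
  simp

end IsDihedralGen

end UnitGroup

section ClassGroupRank

lemma hasZModRankGE_classGroup {R ι : Type*} [CommRing R] [IsDedekindDomain R] [Fintype ι] {n : ℕ}
    (hn : n ≠ 0) {x : ι → R} (hx0 : ∀ i, x i ≠ 0)
    (hx : ∀ i, ∃ I : Ideal R, Ideal.span {x i} = I ^ n)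
    (hrel : ∀ p, p.Prime → p ∣ n → ∀ (c : ι → ℕ) (a : R), Associated (a ^ p) (∏ i, x i ^ c i) →
      ∀ i, p ∣ c i) :
    HasZModRankGE (ClassGroup R) n (Fintype.card ι) := by
  choose I hI using hx
  have hI0 (i : ι) : I i ≠ 0 := by
    rintro h0
    exact hx0 i <| by simpa [h0, hn] using hI i
  let J (i : ι) : nonZeroDivisors (Ideal R) := ⟨I i, mem_nonZeroDivisors_of_ne_zero (hI0 i)⟩
  have hmk0 (L : nonZeroDivisors (Ideal R)) : ClassGroup.mk0 L = 1 ↔ L.1.IsPrincipal :=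
    ClassGroup.mk0_eq_one_iff L.2
  refine hasZModRankGE_of_forall_prime hn (g := fun i => ClassGroup.mk0 (J i)) (fun i => ?_)
    fun p hp m hpm c hc => ?_
  · rw [← map_pow, hmk0]
    exact ⟨x i, (hI i).symm⟩
  · simp only [← map_pow, ← map_prod, hmk0] at hc
    obtain ⟨a, ha⟩ := hc
    refine hrel p hp ⟨m, hpm.symm⟩ c a ?_
    have hpow : ((∏ i, I i ^ c i) ^ m) = Ideal.span {a} := by simpa [J] using ha
    rw [← Ideal.span_singleton_eq_span_singleton, ← Ideal.span_singleton_pow, ← hpow, ← pow_mul,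
      mul_comm m p, hpm, ← Finset.prod_pow, ← Ideal.prod_span_singleton]
    simp only [← Ideal.span_singleton_pow, hI, ← pow_mul, mul_comm]

variable {E : Type*} [Field E] [NumberField E] {pb : PowerBasis ℚ E} {n y k p : ℕ}

namespace IsDihedralGen

lemma dvd_of_associated_pow_prod (h : IsDihedralGen pb k) (hy : IsAdmissible n y k)
    (hn6 : n.Coprime 6) (hp : p.Prime) (hpn : p ∣ n) {c : DihedralGroup 6 → ℕ} (hc1 : c 1 = 0)
    {a : 𝓞 E} (ha : Associated (a ^ p) (∏ d, (h.conjugate d + 2) ^ c d)) (d : DihedralGroup 6) :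
    p ∣ c d := by
  have := Fact.mk hp
  obtain ⟨ε, hε⟩ := ha
  obtain ⟨ζ, e, he1, hesr, hζ⟩ := h.exists_unit_eq_pow_mul_prod hy hn6 hpn ε
  have hprod : (a : E) ^ p * (ε : E) = ∏ d, (dihedralMobius d pb.gen + 2) ^ c d := by
    simpa [h.algebraMap_conjugate, map_ofNat] using congrArg (algebraMap (𝓞 E) E) hε
  have hne : ∏ d, basicUnit (dihedralMobius d pb.gen) ^ e d ≠ 0 :=
    right_ne_zero_of_mul (hζ ▸ Units.coe_ne_zero ε)
  have hα : ((a : E) * ζ) ^ p = (∏ d, (dihedralMobius d pb.gen + 2) ^ (c d : ℤ)) *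
      ∏ d, basicUnit (dihedralMobius d pb.gen) ^ (-e) d := by
    simp only [Pi.neg_apply, zpow_neg, Finset.prod_inv_distrib, zpow_natCast]
    rw [eq_mul_inv_iff_mul_eq₀ hne, ← hprod, hζ]
    ring
  have hdvd := (h.dvd_sub_and_dvd_of_pow_eq_prod hy hn6 hp hpn (by simp [he1])
    (by simp [hesr]) hα).1 d
  rw [hc1, Nat.cast_zero, sub_zero] at hdvd
  exact_mod_cast hdvd

theorem hasZModRankGE_classGroup (h : IsDihedralGen pb k) (hy : IsAdmissible n y k)
    (hn6 : n.Coprime 6) : HasZModRankGE (ClassGroup (𝓞 E)) n 11 := by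
  have hcard : Fintype.card {d : DihedralGroup 6 // d ≠ 1} = 11 := by
    simp [Fintype.card_subtype_compl, DihedralGroup.card]
  rw [← hcard]
  refine _root_.hasZModRankGE_classGroup hy.ne_zero
    (x := fun d : {d : DihedralGroup 6 // d ≠ 1} => h.conjugate d + 2)
    (fun d => h.conjugate_add_two_ne_zero hy d)
    (fun d => h.exists_span_conjugate_add_two_eq_pow hy d) fun p hp hpn c a ha d => ?_
  let c' (d : DihedralGroup 6) : ℕ := if hd : d ≠ 1 then c ⟨d, hd⟩ else 0
  have hc' (d : {d : DihedralGroup 6 // d ≠ 1}) : c' d = c d := dif_pos d.2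
  have hc'1 : c' 1 = 0 := dif_neg (by simp)
  rw [← hc']
  refine h.dvd_of_associated_pow_prod hy hn6 hp hpn hc'1 (a := a) ?_ d
  rw [Fintype.prod_eq_mul_prod_subtype_ne _ 1, hc'1, pow_zero, one_mul]
  simpa only [hc'] using ha

end IsDihedralGen

end ClassGroupRank

section QuadraticSubfields

lemma isSquare_mul_of_forall_apply_eq_iff {F K : Type*} [Field F] [Field K] [Algebra F K]
    [FiniteDimensional F K] [IsGalois F K] {a b : F} {s t : K} (hs : s ^ 2 = algebraMap F K a)
    (ht : t ^ 2 = algebraMap F K b) (hst : ∀ σ : Gal(K/F), σ s = s ↔ σ t = t) :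
    IsSquare (a * b) := by
  have hsign {u : K} {c : F} (hu : u ^ 2 = algebraMap F K c) (σ : Gal(K/F)) :
      σ u = u ∨ σ u = -u := by
    rw [← sq_eq_sq_iff_eq_or_eq_neg, ← map_pow, hu, AlgEquiv.commutes]
  have hfix (σ : Gal(K/F)) : σ (s * t) = s * t := by
    by_cases hσ : σ s = s
    · rw [map_mul, hσ, (hst σ).mp hσ]
    · rw [map_mul, (hsign hs σ).resolve_left hσ,
        (hsign ht σ).resolve_left fun h => hσ ((hst σ).mpr h), neg_mul_neg]
  obtain ⟨r, hr⟩ := IntermediateField.mem_bot.mp ((IsGalois.mem_bot_iff_fixed _).mpr hfix)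
  refine ⟨r, FaithfulSMul.algebraMap_injective F K ?_⟩
  rw [map_mul, map_mul, hr, ← hs, ← ht]
  ring

lemma not_isSquare_mul_of_prime {p a b : ℤ} (hp : Prime p) (ha : ¬ p ∣ a) (hb : p ∣ b)
    (hb2 : ¬ p ^ 2 ∣ b) : ¬ IsSquare (a * b) := by
  rintro ⟨m, hm⟩
  have hpm : p ∣ m := or_self_iff.mp <| hp.dvd_or_dvd <| hm ▸ hb.mul_left a
  exact hb2 <| hp.pow_dvd_of_dvd_mul_left 2 ha <| hm ▸ sq m ▸ pow_dvd_pow_of_dvd hpm 2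

-- A field with finitely many automorphisms has finitely many quadratic subfields, each determined
-- by the automorphisms that fix it.
theorem finite_setOf_prime_exists_isSquare (K : Type*) [Field K] [NumberField K] [IsGalois ℚ K] :
    {p : ℕ | p.Prime ∧ ∃ a : ℤ, a ≠ 0 ∧ (p : ℤ) ∣ a ∧ ¬ (p : ℤ) ^ 2 ∣ a ∧
      IsSquare (a : K)}.Finite := by
  by_contra hinf
  set S := {p : ℕ | p.Prime ∧ ∃ a : ℤ, a ≠ 0 ∧ (p : ℤ) ∣ a ∧ ¬ (p : ℤ) ^ 2 ∣ a ∧ IsSquare (a : K)}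
  have : Infinite S := Set.infinite_coe_iff.mpr hinf
  have hroot (p : S) : ∃ a : ℤ, a ≠ 0 ∧ (p : ℤ) ∣ a ∧ ¬ (p : ℤ) ^ 2 ∣ a ∧ ∃ s : K, s ^ 2 = a := by
    obtain ⟨a, ha0, hpa, hpa2, s, hs⟩ := p.2.2
    exact ⟨a, ha0, hpa, hpa2, s, by rw [hs, sq]⟩
  choose a ha0 hpa hpa2 s hs using hroot
  obtain ⟨H, hH⟩ := Finite.exists_infinite_fiber fun p : S => {σ : Gal(K/ℚ) | σ (s p) = s p}
  have hfiber := Set.infinite_coe_iff.mp hH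
  obtain ⟨p, hpH⟩ := hfiber.nonempty
  obtain ⟨_, ⟨q, hqH, rfl⟩, hq⟩ :=
    (hfiber.image Subtype.val_injective.injOn).exists_gt (a p).natAbs
  have hst (σ : Gal(K/ℚ)) : σ (s p) = s p ↔ σ (s q) = s q :=
    Set.ext_iff.mp ((Set.mem_singleton_iff.mp hpH).trans (Set.mem_singleton_iff.mp hqH).symm) σ
  have hsq : IsSquare ((a p : ℚ) * a q) :=
    isSquare_mul_of_forall_apply_eq_iff (by simpa using hs p) (by simpa using hs q) hst
  have hqp : ¬ (q : ℤ) ∣ a p := fun hdvd =>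
    hq.not_ge <| Nat.le_of_dvd (Int.natAbs_pos.mpr (ha0 p)) (Int.natCast_dvd.mp hdvd)
  exact not_isSquare_mul_of_prime (Nat.prime_iff_prime_int.mp q.2.1) hqp (hpa q) (hpa2 q)
    (Rat.isSquare_intCast_iff.mp (by exact_mod_cast hsq))

end QuadraticSubfields

section DihedralFields

namespace IsDihedralGen

variable {E : Type*} [Field E] [NumberField E] {pb : PowerBasis ℚ E}

lemma isSquare_neg_twentySeven_mul {k : ℤ} (h : IsDihedralGen pb k) :
    IsSquare ((-27 * k : ℤ) : E) := by
  have hroot := h.aeval_gen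
  rw [aeval_dihedralPoly] at hroot
  have hsextic : sexticForm pb.gen 1 ≠ 0 := by
    have h01 := h.linear_ne_zero (a := 1) (b := 0) (by lia)
    have h11 := h.linear_ne_zero (a := 1) (b := -1) (by lia)
    have h12 := h.linear_ne_zero (a := 1) (b := 1) (by lia)
    have h13 := h.linear_ne_zero (a := 1) (b := -2) (by lia)
    have h14 := h.linear_ne_zero (a := 2) (b := -1) (by lia)
    push_cast [← sub_eq_add_neg] at h01 h11 h12 h13 h14
    simp_all [sexticForm]
  refine ⟨quadForm pb.gen 1 ^ 3 / sexticForm pb.gen 1, ?_⟩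
  field_simp
  push_cast
  linear_combination -hroot

lemma isSplittingField {k : ℤ} (h : IsDihedralGen pb k) :
    ((dihedralPoly k).map (Int.castRingHom ℚ)).IsSplittingField ℚ E := by
  have := h.isGalois
  rw [← h]
  refine ⟨Normal.splits inferInstance pb.gen, eq_top_iff.mpr ?_⟩
  rw [← pb.adjoin_gen_eq_top]
  refine Algebra.adjoin_mono (Set.singleton_subset_iff.mpr ?_)
  exact mem_rootSet.mpr ⟨minpoly.ne_zero pb.isIntegral_gen, minpoly.aeval ℚ pb.gen⟩

end IsDihedralGen

lemma exists_isDihedralGen {k : ℤ} (hk : k % 4 = 2) :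
    ∃ (K : IntermediateField ℚ ℂ) (_ : NumberField K) (pb : PowerBasis ℚ K),
      IsDihedralGen pb k := by
  have hirr := map_dihedralPoly_irreducible hk
  have hmon := (dihedralPoly_monic k).map (Int.castRingHom ℚ)
  obtain ⟨θ, hθ⟩ := IsAlgClosed.exists_aeval_eq_zero ℂ _ (degree_pos_of_irreducible hirr).ne'
  let pb := IntermediateField.adjoin.powerBasis (K := ℚ) ⟨_, hmon, hθ⟩
  have : FiniteDimensional ℚ (IntermediateField.adjoin ℚ {θ}) := pb.finite
  refine ⟨_, ⟨⟩, pb, ?_⟩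
  exact (IntermediateField.minpoly_gen ℚ θ).trans
    (minpoly.eq_of_irreducible_of_monic hirr hθ hmon).symm

lemma isSplittingField_C_mul {F K : Type*} [Field F] [Field K] [Algebra F K] {c : F} (hc : c ≠ 0)
    {f : F[X]} (hf : f.IsSplittingField F K) : (C c * f).IsSplittingField F K := by
  refine ⟨?_, ?_⟩
  · rw [Polynomial.map_mul, map_C]
    exact (Splits.C _).mul hf.splits'
  · rw [rootSet, aroots_C_mul _ hc]
    exact hf.adjoin_rootSet'

lemma eq_of_algEquiv_of_normal {F L : Type*} [Field F] [Field L] [Algebra F L]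
    {K K' : IntermediateField F L} (hK : Normal F K) (e : K ≃ₐ[F] K') : K = K' := by
  rw [← (K'.val.comp e.toAlgHom).fieldRange_of_normal]
  ext x
  refine ⟨?_, fun hx => ⟨e.symm ⟨x, hx⟩, by simp⟩⟩
  rintro ⟨z, rfl⟩
  exact (e z).2

lemma IsAdmissible.base_pos {n y k : ℕ} (hy : IsAdmissible n y k) : 0 < y :=
  y.pos_of_ne_zero ((pow_ne_zero_iff hy.ne_zero).mp hy.pow_ne_zero)

/-- The fields `ℚ(θ) ⊆ ℂ`, where `θ` runs over the roots of the polynomials `dihedralPoly k` with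
`k` an admissible parameter for the exponent `n`. -/
def dihedralFields (n : ℕ) : Set (IntermediateField ℚ ℂ) :=
  {K | ∃ (_ : NumberField K) (y k : ℕ) (pb : PowerBasis ℚ K),
    IsAdmissible n y k ∧ IsDihedralGen pb k}

theorem dihedralFields_infinite {n : ℕ} (hn6 : n.Coprime 6) : (dihedralFields n).Infinite := by
  have hn : n ≠ 0 := by
    rintro rfl
    norm_num at hn6
  intro hfin
  let T := {q : ℕ | q.Prime ∧ n < q ∧ 13 < q ∧ (q : ZMod n) = -1}
  have hT : T.Infinite := Set.infinite_of_forall_exists_gt fun B => by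
    obtain ⟨q, hq, hqp, hqn⟩ := exists_prime_gt_and_eq_neg_one hn (B + n + 13)
    exact ⟨q, ⟨hqp, by lia, by lia, hqn⟩, by lia⟩
  have hramified : (⋃ K ∈ dihedralFields n, {p : ℕ | p.Prime ∧ ∃ a : ℤ, a ≠ 0 ∧ (p : ℤ) ∣ a ∧
      ¬ (p : ℤ) ^ 2 ∣ a ∧ IsSquare (a : K)}).Finite := by
    refine hfin.biUnion ?_
    rintro K ⟨_, y, k, pb, -, h⟩
    have := h.isGalois
    exact finite_setOf_prime_exists_isSquare K
  refine hT (hramified.subset ?_)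
  rintro q ⟨hq, hnq, hq13, hqn⟩
  obtain ⟨y, k, hy, hqk, hqk2⟩ := exists_isAdmissible hn6 hq hnq hq13 hqn
  obtain ⟨K, hK, pb, h⟩ := exists_isDihedralGen (k := k) (by have := hy.mod_four; lia)
  refine Set.mem_biUnion (show K ∈ dihedralFields n from ⟨hK, y, k, pb, hy, h⟩)
    ⟨hq, -27 * k, ?_, ?_, ?_, h.isSquare_neg_twentySeven_mul⟩
  · have := hy.pos
    lia
  · exact (Int.natCast_dvd_natCast.mpr hqk).mul_left _
  · intro hdvd
    have hcop : IsCoprime ((q : ℤ) ^ 2) (-27) := by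
      refine (Int.isCoprime_iff_gcd_eq_one.mpr ?_).pow_left
      exact (Nat.coprime_primes hq Nat.prime_three).mpr (by lia) |>.pow_right 3
    exact hqk2 (by exact_mod_cast hcop.dvd_of_dvd_mul_left hdvd)

end DihedralFields

/-- **`D₆`-fields with large class group.**
For every integer `n > 1` coprime to `6` there are infinitely many pairwise non-isomorphic
totally imaginary Galois number fields `K` of degree `12` with Galois group the dihedral
group `D₆` of order `12`, each a splitting field of the irreducible degree-12 polynomial
`(x+2)(2x+1)(x-3)(3x-1)(x+4)(4x+1)(x-5)(5x-1)(2x-3)(3x-2)(4x-5)(5x-4)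
  + yⁿ·x²(x-1)²(x+1)²(x-2)²(2x-1)²`
with `y` a positive integer, `yⁿ ≡ 117649 (mod 388800)` and `y` coprime to `7`, `11`
and `13`, such that `rank_n Cl(K) ≥ 11`. -/
theorem D6_large_class_group (n : ℕ) (hn : 1 < n) (hn6 : Nat.Coprime n 6) :
    ∃ S : Set (IntermediateField ℚ ℂ), S.Infinite ∧
      (∀ K ∈ S, ∀ K' ∈ S, K ≠ K' → IsEmpty (K ≃+* K')) ∧
      ∀ K ∈ S, ∃ y : ℕ, 0 < y ∧ y ^ n % 388800 = 117649 ∧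
        Nat.Coprime y 7 ∧ Nat.Coprime y 11 ∧ Nat.Coprime y 13 ∧
        (let P : Polynomial ℚ :=
          (X + 2) * (2 * X + 1) * (X - 3) * (3 * X - 1) * (X + 4) * (4 * X + 1) *
            (X - 5) * (5 * X - 1) * (2 * X - 3) * (3 * X - 2) * (4 * X - 5) * (5 * X - 4) +
          C ((y : ℚ) ^ n) *
            (X ^ 2 * (X - 1) ^ 2 * (X + 1) ^ 2 * (X - 2) ^ 2 * (2 * X - 1) ^ 2)
         Irreducible P ∧ P.IsSplittingField ℚ K) ∧
        NumberField K ∧ Module.finrank ℚ K = 12 ∧ IsGalois ℚ K ∧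
        Nonempty ((K ≃ₐ[ℚ] K) ≃* DihedralGroup 6) ∧
        TotallyImaginary K ∧
        HasZModRankGE (ClassGroup (𝓞 K)) n 11 := by
  refine ⟨dihedralFields n, dihedralFields_infinite hn6, ?_, ?_⟩
  · rintro K ⟨_, y, k, pb, -, h⟩ K' - hne
    exact ⟨fun e => hne <| eq_of_algEquiv_of_normal h.isGalois.to_normal <|
      .ofRingEquiv (f := e) fun r => by simp⟩
  · rintro K ⟨hK, y, k, pb, hy, h⟩
    have hpow := hy.pow_eq
    have hk := hy.mod_four
    refine ⟨y, hy.base_pos, by lia, hy.coprime.coprime_dvd_right (by norm_num),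
      hy.coprime.coprime_dvd_right (by norm_num), hy.coprime.coprime_dvd_right (by norm_num),
      ⟨?_, ?_⟩, hK, h.finrank_eq, h.isGalois, h.exists_galEquiv.nonempty.map MulEquiv.symm,
      fun φ => ⟨pb.gen, h.im_gen_ne_zero hy.pos φ⟩, h.hasZModRankGE_classGroup hy hn6⟩
    · rw [prod_add_C_mul_eq_C_mul_dihedralPoly hpow]
      exact (irreducible_isUnit_mul (isUnit_C.mpr (by norm_num))).mpr
        (map_dihedralPoly_irreducible (by lia))
    · rw [prod_add_C_mul_eq_C_mul_dihedralPoly hpow]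
      exact isSplittingField_C_mul (by norm_num) h.isSplittingField
end

section
/- For every real number t > 100 and every real number x, one has (x−2)(2x−1)(x+3)(3x+1)(2x+3)(3x+2) + t·x²(x+1)² > 0. In particular, for any integers y, n with yⁿ > 100, the polynomial x⁶ + 3x⁵ + ((yⁿ−127)/36)x⁴ + ((yⁿ−217)/18)x³ + ((yⁿ−127)/36)x² + 3x + 1 = (1/36)·((x−2)(2x−1)(x+3)(3x+1)(2x+3)(3x+2) + yⁿ·x²(x+1)²) has no real root. -/
/-!
The maps `x ↦ 1 / x` and `x ↦ -1 - x` generate a group of Möbius transformations isomorphic to `S₃`.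
The six roots `2, 1/2, -3, -1/3, -3/2, -2/3` of the product form one orbit, so its quotient by
`x² (x + 1)²` is an invariant of degree six.  The orbit `1, -2, -1/2` has only three elements,
so the invariant takes its value there, which is `-100`, twice at each point.  Hence for `t = 100`
the sextic is the square of `3 (x - 1) (x + 2) (2 x + 1)`, and increasing `t` adds a positive
multiple of `(x (x + 1))²`, which shares no zero with that square.
-/

section Positivity

variable {R : Type*} [CommRing R]

lemma S3_sextic_eq_sq_add_mul_sq (t x : R) :
    (x - 2) * (2 * x - 1) * (x + 3) * (3 * x + 1) * (2 * x + 3) * (3 * x + 2) +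
        t * x ^ 2 * (x + 1) ^ 2 =
      (3 * ((x - 1) * (x + 2) * (2 * x + 1))) ^ 2 + (t - 100) * (x * (x + 1)) ^ 2 := by
  ring

lemma S3_sextic_pos [LinearOrder R] [IsStrictOrderedRing R] {t : R} (ht : 100 < t) (x : R) :
    0 < (x - 2) * (2 * x - 1) * (x + 3) * (3 * x + 1) * (2 * x + 3) * (3 * x + 2) +
        t * x ^ 2 * (x + 1) ^ 2 := by
  rcases eq_or_ne (x * (x + 1)) 0 with hx | hx
  · rcases mul_eq_zero.mp hx with h_zero | h_neg_one
    · norm_num [h_zero]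
    · norm_num [eq_neg_of_add_eq_zero_left h_neg_one]
  · rw [S3_sextic_eq_sq_add_mul_sq]
    exact add_pos_of_nonneg_of_pos (sq_nonneg _)
      (mul_pos (sub_pos.mpr ht) (sq_pos_of_ne_zero hx))

end Positivity

section MonicForm

variable {K : Type*} [Field K]

lemma S3_monic_sextic_eq [CharZero K] (t x : K) :
    x ^ 6 + 3 * x ^ 5 + ((t - 127) / 36) * x ^ 4 + ((t - 217) / 18) * x ^ 3 +
        ((t - 127) / 36) * x ^ 2 + 3 * x + 1 =
      (1 / 36) * ((x - 2) * (2 * x - 1) * (x + 3) * (3 * x + 1) * (2 * x + 3) * (3 * x + 2) +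
        t * (x ^ 2 * (x + 1) ^ 2)) := by
  ring

lemma S3_monic_sextic_pos [LinearOrder K] [IsStrictOrderedRing K] {t : K} (ht : 100 < t) (x : K) :
    0 < x ^ 6 + 3 * x ^ 5 + ((t - 127) / 36) * x ^ 4 + ((t - 217) / 18) * x ^ 3 +
        ((t - 127) / 36) * x ^ 2 + 3 * x + 1 := by
  rw [S3_monic_sextic_eq, ← mul_assoc t]
  exact mul_pos (by norm_num) (S3_sextic_pos ht x)

theorem S3_polynomial_positivity_general [LinearOrder K] [IsStrictOrderedRing K] :
    (∀ t x : K, 100 < t →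
      0 < (x - 2) * (2 * x - 1) * (x + 3) * (3 * x + 1) * (2 * x + 3) * (3 * x + 2) +
        t * x ^ 2 * (x + 1) ^ 2) ∧
    ∀ t : K, 100 < t → ∀ x : K,
      (x ^ 6 + 3 * x ^ 5 + ((t - 127) / 36) * x ^ 4 + ((t - 217) / 18) * x ^ 3 +
          ((t - 127) / 36) * x ^ 2 + 3 * x + 1 =
        (1 / 36) * ((x - 2) * (2 * x - 1) * (x + 3) * (3 * x + 1) * (2 * x + 3) *
          (3 * x + 2) + t * (x ^ 2 * (x + 1) ^ 2))) ∧
      x ^ 6 + 3 * x ^ 5 + ((t - 127) / 36) * x ^ 4 + ((t - 217) / 18) * x ^ 3 +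
          ((t - 127) / 36) * x ^ 2 + 3 * x + 1 ≠ 0 :=
  ⟨fun _ x ht => S3_sextic_pos ht x,
    fun t ht x => ⟨S3_monic_sextic_eq t x, (S3_monic_sextic_pos ht x).ne'⟩⟩

end MonicForm

/-- **Positivity in the `S₃` case.**
For every real `t > 100` and every real `x`,
`(x-2)(2x-1)(x+3)(3x+1)(2x+3)(3x+2) + t·x²(x+1)² > 0`.  In particular, for integers `y, n`
with `yⁿ > 100`, the polynomial
`x⁶ + 3x⁵ + ((yⁿ-127)/36)x⁴ + ((yⁿ-217)/18)x³ + ((yⁿ-127)/36)x² + 3x + 1`, which equals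
`(1/36)((x-2)(2x-1)(x+3)(3x+1)(2x+3)(3x+2) + yⁿ·x²(x+1)²)`, has no real root. -/
theorem S3_polynomial_positivity :
    (∀ t x : ℝ, 100 < t →
      0 < (x - 2) * (2 * x - 1) * (x + 3) * (3 * x + 1) * (2 * x + 3) * (3 * x + 2) +
        t * x ^ 2 * (x + 1) ^ 2) ∧
    ∀ (y : ℤ) (n : ℕ), 100 < y ^ n → ∀ x : ℝ,
      (x ^ 6 + 3 * x ^ 5 + (((y : ℝ) ^ n - 127) / 36) * x ^ 4 +
          (((y : ℝ) ^ n - 217) / 18) * x ^ 3 + (((y : ℝ) ^ n - 127) / 36) * x ^ 2 +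
          3 * x + 1 =
        (1 / 36) * ((x - 2) * (2 * x - 1) * (x + 3) * (3 * x + 1) * (2 * x + 3) *
          (3 * x + 2) + (y : ℝ) ^ n * (x ^ 2 * (x + 1) ^ 2))) ∧
      x ^ 6 + 3 * x ^ 5 + (((y : ℝ) ^ n - 127) / 36) * x ^ 4 +
          (((y : ℝ) ^ n - 217) / 18) * x ^ 3 + (((y : ℝ) ^ n - 127) / 36) * x ^ 2 +
          3 * x + 1 ≠ 0 := by
  obtain ⟨pos, no_root⟩ := S3_polynomial_positivity_general (K := ℝ)
  exact ⟨pos, fun y n hy => no_root (y ^ n) (mod_cast hy)⟩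
end

section
/- For every real number t > 49 and every real number x, one has (x−2)(2x−1)(x+2)(2x+1)(x−3)(3x−1)(x+3)(3x+1) + t·x²(x−1)²(x+1)² > 0. In particular, for any integers y, n with yⁿ > 49, the polynomial x⁸ + ((yⁿ−481)/36)x⁶ − ((yⁿ−733)/18)x⁴ + ((yⁿ−481)/36)x² + 1 = (1/36)·((x−2)(2x−1)(x+2)(2x+1)(x−3)(3x−1)(x+3)(3x+1) + yⁿ·x²(x−1)²(x+1)²) has no real root. -/
/-!
Put `A = x⁴ - 6x² + 1` and `B = x(x² - 1)`. The eight linear factors split into two groups of four,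
with products `6A - 7B` and `6A + 7B`, so the expression equals `36A² + (t - 49)B²`. As `A` and
`-4B` are the real and imaginary parts of `(1 + xi)⁴`, they satisfy `A² + (4B)² = (x² + 1)⁴` and
cannot vanish together in an ordered ring.
-/

section CommRing

variable {R : Type*} [CommRing R]

lemma D4_linear_factors_prod_eq_sq_sub_sq (x : R) :
    (x - 2) * (2 * x - 1) * (x + 2) * (2 * x + 1) * (x - 3) * (3 * x - 1) * (x + 3) * (3 * x + 1) =
      (6 * (x ^ 4 - 6 * x ^ 2 + 1)) ^ 2 - (7 * (x * (x ^ 2 - 1))) ^ 2 := by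
  have minus_group : (x - 3) * (3 * x + 1) * (x + 2) * (2 * x - 1) =
      6 * (x ^ 4 - 6 * x ^ 2 + 1) - 7 * (x * (x ^ 2 - 1)) := by ring
  have plus_group : (x + 3) * (3 * x - 1) * (x - 2) * (2 * x + 1) =
      6 * (x ^ 4 - 6 * x ^ 2 + 1) + 7 * (x * (x ^ 2 - 1)) := by ring
  rw [sq_sub_sq, ← minus_group, ← plus_group]
  ring

lemma D4_linear_factors_prod_add_eq (t x : R) :
    (x - 2) * (2 * x - 1) * (x + 2) * (2 * x + 1) * (x - 3) * (3 * x - 1) * (x + 3) * (3 * x + 1) +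
        t * x ^ 2 * (x - 1) ^ 2 * (x + 1) ^ 2 =
      36 * (x ^ 4 - 6 * x ^ 2 + 1) ^ 2 + (t - 49) * (x * (x ^ 2 - 1)) ^ 2 := by
  rw [D4_linear_factors_prod_eq_sq_sub_sq]
  ring

lemma sq_add_four_mul_sq_eq_sq_add_one_pow_four (x : R) :
    (x ^ 4 - 6 * x ^ 2 + 1) ^ 2 + (4 * (x * (x ^ 2 - 1))) ^ 2 = (x ^ 2 + 1) ^ 4 := by
  ring

end CommRing

section OrderedRing

variable {R : Type*} [CommRing R] [LinearOrder R] [IsStrictOrderedRing R]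

lemma quartic_ne_zero_or_cubic_ne_zero (x : R) :
    x ^ 4 - 6 * x ^ 2 + 1 ≠ 0 ∨ x * (x ^ 2 - 1) ≠ 0 := by
  by_contra! ⟨quartic_eq_zero, cubic_eq_zero⟩
  have pow_four_eq_zero : (x ^ 2 + 1) ^ 4 = 0 := by
    simp [← sq_add_four_mul_sq_eq_sq_add_one_pow_four, quartic_eq_zero, cubic_eq_zero]
  have pow_four_pos : 0 < (x ^ 2 + 1) ^ 4 := by positivity
  exact pow_four_pos.ne' pow_four_eq_zero

lemma mul_sq_add_mul_sq_pos {p q a b : R} (hp : 0 < p) (hq : 0 < q) (hab : a ≠ 0 ∨ b ≠ 0) :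
    0 < p * a ^ 2 + q * b ^ 2 := by
  rcases hab with ha | hb <;> positivity

lemma D4_linear_factors_prod_add_pos {t : R} (ht : 49 < t) (x : R) :
    0 < (x - 2) * (2 * x - 1) * (x + 2) * (2 * x + 1) * (x - 3) * (3 * x - 1) *
      (x + 3) * (3 * x + 1) + t * x ^ 2 * (x - 1) ^ 2 * (x + 1) ^ 2 := by
  rw [D4_linear_factors_prod_add_eq]
  exact mul_sq_add_mul_sq_pos (by norm_num) (sub_pos.2 ht) (quartic_ne_zero_or_cubic_ne_zero x)

end OrderedRing

lemma D4_polynomial_eq_linear_factors_prod_add {K : Type*} [Field K] [CharZero K] (t x : K) :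
    x ^ 8 + ((t - 481) / 36) * x ^ 6 - ((t - 733) / 18) * x ^ 4 + ((t - 481) / 36) * x ^ 2 + 1 =
      (1 / 36) * ((x - 2) * (2 * x - 1) * (x + 2) * (2 * x + 1) * (x - 3) * (3 * x - 1) *
        (x + 3) * (3 * x + 1) + t * (x ^ 2 * (x - 1) ^ 2 * (x + 1) ^ 2)) := by
  ring

theorem D4_polynomial_positivity_general {K : Type*} [Field K] [LinearOrder K]
    [IsStrictOrderedRing K] :
    (∀ t x : K, 49 < t →
      0 < (x - 2) * (2 * x - 1) * (x + 2) * (2 * x + 1) * (x - 3) * (3 * x - 1) *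
        (x + 3) * (3 * x + 1) + t * x ^ 2 * (x - 1) ^ 2 * (x + 1) ^ 2) ∧
    ∀ t : K, 49 < t → ∀ x : K,
      (x ^ 8 + ((t - 481) / 36) * x ^ 6 - ((t - 733) / 18) * x ^ 4 +
          ((t - 481) / 36) * x ^ 2 + 1 =
        (1 / 36) * ((x - 2) * (2 * x - 1) * (x + 2) * (2 * x + 1) * (x - 3) * (3 * x - 1) *
          (x + 3) * (3 * x + 1) + t * (x ^ 2 * (x - 1) ^ 2 * (x + 1) ^ 2))) ∧
      x ^ 8 + ((t - 481) / 36) * x ^ 6 - ((t - 733) / 18) * x ^ 4 +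
          ((t - 481) / 36) * x ^ 2 + 1 ≠ 0 := by
  refine ⟨fun t x ht => D4_linear_factors_prod_add_pos ht x, fun t ht x =>
    ⟨D4_polynomial_eq_linear_factors_prod_add t x, ?_⟩⟩
  have prod_add_pos := D4_linear_factors_prod_add_pos ht x
  rw [D4_polynomial_eq_linear_factors_prod_add, ← mul_assoc t, ← mul_assoc t]
  positivity

/-- **Positivity in the `D₄` case.**
For every real `t > 49` and every real `x`,
`(x-2)(2x-1)(x+2)(2x+1)(x-3)(3x-1)(x+3)(3x+1) + t·x²(x-1)²(x+1)² > 0`.  In particular,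
for integers `y, n` with `yⁿ > 49`, the polynomial
`x⁸ + ((yⁿ-481)/36)x⁶ - ((yⁿ-733)/18)x⁴ + ((yⁿ-481)/36)x² + 1`, which equals
`(1/36)((x-2)(2x-1)(x+2)(2x+1)(x-3)(3x-1)(x+3)(3x+1) + yⁿ·x²(x-1)²(x+1)²)`, has no real
root. -/
theorem D4_polynomial_positivity :
    (∀ t x : ℝ, 49 < t →
      0 < (x - 2) * (2 * x - 1) * (x + 2) * (2 * x + 1) * (x - 3) * (3 * x - 1) *
        (x + 3) * (3 * x + 1) + t * x ^ 2 * (x - 1) ^ 2 * (x + 1) ^ 2) ∧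
    ∀ (y : ℤ) (n : ℕ), 49 < y ^ n → ∀ x : ℝ,
      (x ^ 8 + (((y : ℝ) ^ n - 481) / 36) * x ^ 6 - (((y : ℝ) ^ n - 733) / 18) * x ^ 4 +
          (((y : ℝ) ^ n - 481) / 36) * x ^ 2 + 1 =
        (1 / 36) * ((x - 2) * (2 * x - 1) * (x + 2) * (2 * x + 1) * (x - 3) * (3 * x - 1) *
          (x + 3) * (3 * x + 1) + (y : ℝ) ^ n * (x ^ 2 * (x - 1) ^ 2 * (x + 1) ^ 2))) ∧
      x ^ 8 + (((y : ℝ) ^ n - 481) / 36) * x ^ 6 - (((y : ℝ) ^ n - 733) / 18) * x ^ 4 +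
          (((y : ℝ) ^ n - 481) / 36) * x ^ 2 + 1 ≠ 0 := by
  exact ⟨D4_polynomial_positivity_general.1, fun y n hy =>
    D4_polynomial_positivity_general.2 ((y : ℝ) ^ n) (mod_cast hy)⟩
end
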